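/- arXiv:1503.01284 — 2 statements merged into one kernel-verified Lean document; each statement's English description precedes it below -/
import Mathlib

section
/- Let n ≥ 2 and let E ⊂ ℝⁿ be a non-empty Borel set. Then the union of hyperplanes L(E) = ⋃_{p ∈ E} L(p) satisfies dim_H L(E) = min{dim_H E + n − 1, n}. -/
open MeasureTheory RealInnerProductSpace

/-- The non-vertical hyperplane `L(a,b) = {(x,y) : y = a·x + b}` in `ℝⁿ = ℝ^{n−1} × ℝ`
associated to the point `p = (a,b)`. -/
def hyperplane {n : ℕ} (p : EuclideanSpace ℝ (Fin (n - 1)) × ℝ) :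
    Set (EuclideanSpace ℝ (Fin (n - 1)) × ℝ) :=
  {q | q.2 = ⟪p.1, q.1⟫ + p.2}

/-- `L(E) = ⋃_{p ∈ E} L(p)`, the union of the hyperplanes parametrized by `E`. -/
def hyperplaneUnion {n : ℕ} (E : Set (EuclideanSpace ℝ (Fin (n - 1)) × ℝ)) :
    Set (EuclideanSpace ℝ (Fin (n - 1)) × ℝ) :=
  ⋃ p ∈ E, hyperplane p

namespace HypUnion
open Metric Set Filter Topology
open scoped ENNReal NNReal

theorem exists_pow_scale (d t e : ℝ) (hd0 : 0 ≤ d) (hd1 : d ≤ 1) (ht : 0 < t) (he : 0 < e) :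
    ∃ k : ℕ, d ≤ (1/2 : ℝ)^k ∧ ((1/2 : ℝ)^k)^t ≤ 2^t * d^t + e := by
  rcases hd0.eq_or_lt with h | h
  · have h1 : Tendsto (fun k : ℕ => ((1/2 : ℝ)^k)^t) atTop (𝓝 0) := by
      have h2 : Tendsto (fun k : ℕ => ((1/2 : ℝ)^k)) atTop (𝓝 0) :=
        tendsto_pow_atTop_nhds_zero_of_lt_one (by norm_num) (by norm_num)
      have := h2.rpow_const (p := t) (Or.inr ht.le)
      rwa [Real.zero_rpow ht.ne'] at this
    obtain ⟨k, hk⟩ := (h1.eventually (gt_mem_nhds he)).exists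
    refine ⟨k, by rw [← h]; positivity, ?_⟩
    have : 0 ≤ (2:ℝ)^t * d^t := by positivity
    linarith
  · obtain ⟨k, hk1, hk2⟩ := exists_nat_pow_near_of_lt_one h hd1 (y := (1/2:ℝ)) (by norm_num) (by norm_num)
    refine ⟨k, hk2, ?_⟩
    have : (1/2 : ℝ)^k ≤ 2 * d := by rw [pow_succ] at hk1; linarith
    have h3 : ((1/2 : ℝ)^k)^t ≤ (2 * d)^t := Real.rpow_le_rpow (by positivity) this ht.le
    rw [Real.mul_rpow (by norm_num) h.le] at h3
    linarith

theorem cover_of_null {X : Type*} [MetricSpace X] [MeasurableSpace X] [BorelSpace X] [Nonempty X]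
    (S : Set X) (t : ℝ) (ht : 0 < t) (h0 : μH[t] S = 0) (e : ℝ) (he : 0 < e) :
    ∃ (x : ℕ → X) (k : ℕ → ℕ), S ⊆ ⋃ i, closedBall (x i) ((1/2 : ℝ)^(k i)) ∧
      ∑' i, ENNReal.ofReal (((1/2 : ℝ)^(k i))^t) ≤ ENNReal.ofReal e := by
  rw [Measure.hausdorffMeasure_apply] at h0
  have h1 : (⨅ (u : ℕ → Set X) (_ : S ⊆ ⋃ n, u n) (_ : ∀ n, ediam (u n) ≤ 1),
          ∑' n, ⨆ _ : (u n).Nonempty, ediam (u n) ^ t) = 0 := by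
    have := ENNReal.iSup_eq_zero.1 h0 1
    exact ENNReal.iSup_eq_zero.1 this one_pos
  set e1 : ℝ := e / 2 / 2^t with he1
  have he1p : 0 < e1 := by positivity
  have h2 : (⨅ (u : ℕ → Set X) (_ : S ⊆ ⋃ n, u n) (_ : ∀ n, ediam (u n) ≤ 1),
          ∑' n, ⨆ _ : (u n).Nonempty, ediam (u n) ^ t) < ENNReal.ofReal e1 := by
    rw [h1]; simpa using he1p
  simp only [iInf_lt_iff] at h2
  obtain ⟨u, hu, hud, hus⟩ := h2
  have hcenter : ∀ i, ∃ x : X, ∀ y ∈ u i, x ∈ u i := by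
    intro i
    rcases (u i).eq_empty_or_nonempty with h | ⟨x, hx⟩
    · exact ⟨Classical.arbitrary X, by simp [h]⟩
    · exact ⟨x, fun _ _ => hx⟩
  choose x hx using hcenter
  have hbd : ∀ i, ediam (u i) ≠ ∞ := fun i => ne_top_of_le_ne_top ENNReal.one_ne_top (hud i)
  have hsc : ∀ i : ℕ, ∃ k : ℕ, diam (u i) ≤ (1/2 : ℝ)^k ∧
      ((1/2 : ℝ)^k)^t ≤ 2^t * (diam (u i))^t + (e/2/2/2^i) := by
    intro i
    refine exists_pow_scale _ _ _ diam_nonneg ?_ ht (by positivity)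
    exact ENNReal.toReal_le_of_le_ofReal zero_le_one (by simpa using hud i)
  choose k hk1 hk2 using hsc
  refine ⟨x, k, fun z hz => ?_, ?_⟩
  · obtain ⟨i, hi⟩ := mem_iUnion.1 (hu hz)
    refine mem_iUnion.2 ⟨i, ?_⟩
    exact (dist_le_diam_of_mem' (hbd i) hi (hx i z hi)).trans (hk1 i)
  · have hterm : ∀ i, ENNReal.ofReal (((1/2 : ℝ)^(k i))^t) ≤
        ENNReal.ofReal (2^t) * (⨆ _ : (u i).Nonempty, ediam (u i) ^ t) + ENNReal.ofReal (e/2/2/2^i) := by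
      intro i
      refine (ENNReal.ofReal_le_ofReal (hk2 i)).trans ?_
      rw [ENNReal.ofReal_add (by positivity) (by positivity), ENNReal.ofReal_mul (by positivity)]
      gcongr
      rcases (u i).eq_empty_or_nonempty with h | h
      · simp [h, Real.zero_rpow ht.ne']
      · simp only [h, iSup_pos]
        rw [← ENNReal.ofReal_rpow_of_nonneg diam_nonneg ht.le, diam, ENNReal.ofReal_toReal (hbd i)]
    have hs : Summable (fun i : ℕ => e/2/2/2^i) := summable_geometric_two' _
    calc _ ≤ ∑' i, (ENNReal.ofReal (2^t) * (⨆ _ : (u i).Nonempty, ediam (u i) ^ t) + ENNReal.ofReal (e/2/2/2^i)) :=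
          ENNReal.tsum_le_tsum hterm
      _ = ENNReal.ofReal (2^t) * (∑' i, (⨆ _ : (u i).Nonempty, ediam (u i) ^ t)) + ENNReal.ofReal (e/2) := by
          rw [ENNReal.tsum_add, ENNReal.tsum_mul_left, ← ENNReal.ofReal_tsum_of_nonneg (fun i => by positivity) hs,
            tsum_geometric_two']
      _ ≤ ENNReal.ofReal (2^t) * ENNReal.ofReal e1 + ENNReal.ofReal (e/2) := by gcongr
      _ = ENNReal.ofReal e := by
          rw [← ENNReal.ofReal_mul (by positivity), ← ENNReal.ofReal_add (by positivity) (by positivity)]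
          congr 1
          rw [he1]; field_simp; norm_num

theorem null_of_cover {X : Type*} [MetricSpace X] [MeasurableSpace X] [BorelSpace X]
    (S : Set X) (t : ℝ) (ht : 0 < t)
    (H : ∀ e : ℝ, 0 < e → ∃ (ι : Type) (_ : Countable ι) (x : ι → X) (r : ι → ℝ), (∀ i, 0 ≤ r i) ∧
      S ⊆ ⋃ i, closedBall (x i) (r i) ∧ ∑' i, ENNReal.ofReal ((r i)^t) ≤ ENNReal.ofReal e) :
    μH[t] S = 0 := by
  have H' : ∀ n : ℕ, ∃ (ι : Type) (_ : Countable ι) (x : ι → X) (r : ι → ℝ), (∀ i, 0 ≤ r i) ∧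
      S ⊆ ⋃ i, closedBall (x i) (r i) ∧ ∑' i, ENNReal.ofReal ((r i)^t) ≤ ENNReal.ofReal ((1/2)^n) :=
    fun n => H _ (by positivity)
  choose ι hι x r hr hc hs using H'
  have hlim : Tendsto (fun n : ℕ => ENNReal.ofReal ((1/2:ℝ)^n)) atTop (𝓝 0) := by
    have h2 : Tendsto (fun k : ℕ => ((1/2 : ℝ)^k)) atTop (𝓝 0) :=
        tendsto_pow_atTop_nhds_zero_of_lt_one (by norm_num) (by norm_num)
    simpa using ENNReal.tendsto_ofReal h2
  have hdi : ∀ n i, ediam (closedBall (x n i) (r n i)) ≤ 2 * ENNReal.ofReal (r n i) := by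
    intro n i
    rw [← Metric.closedEBall_ofReal (hr n i)]
    exact ediam_closedEBall_le
  have hri : ∀ n i, ENNReal.ofReal (r n i) ≤ ENNReal.ofReal ((1/2:ℝ)^n) ^ (1/t) := by
    intro n i
    have h1 : ENNReal.ofReal ((r n i)^t) ≤ ENNReal.ofReal ((1/2:ℝ)^n) :=
      (ENNReal.le_tsum i).trans (hs n)
    rw [← ENNReal.ofReal_rpow_of_nonneg (hr n i) ht.le] at h1
    rw [one_div t]
    exact (ENNReal.le_rpow_inv_iff ht).2 h1
  have hlim2 : Tendsto (fun n : ℕ => 2 * ENNReal.ofReal ((1/2:ℝ)^n) ^ (1/t)) atTop (𝓝 0) := by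
    have h1 := hlim.ennrpow_const (1/t)
    rw [ENNReal.zero_rpow_of_pos (by positivity)] at h1
    simpa using ENNReal.Tendsto.const_mul h1 (a := 2) (Or.inr (by norm_num))
  have hle := Measure.hausdorffMeasure_le_liminf_tsum t S (l := atTop) _ hlim2
    (fun n i => closedBall (x n i) (r n i))
    (Eventually.of_forall fun n i => (hdi n i).trans (by gcongr; exact hri n i))
    (Eventually.of_forall hc)
  have hle2 : ∀ n, ∑' i, ediam (closedBall (x n i) (r n i)) ^ t ≤
      2 ^ t * ENNReal.ofReal ((1/2:ℝ)^n) := by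
    intro n
    calc _ ≤ ∑' i, 2^t * ENNReal.ofReal ((r n i)^t) := by
          refine ENNReal.tsum_le_tsum fun i => ?_
          rw [← ENNReal.ofReal_rpow_of_nonneg (hr n i) ht.le, ← ENNReal.mul_rpow_of_nonneg _ _ ht.le]
          gcongr
          exact hdi n i
      _ ≤ _ := by
          rw [ENNReal.tsum_mul_left]
          gcongr
          exact hs n
  have hlim3 : Tendsto (fun n : ℕ => (2:ℝ≥0∞)^t * ENNReal.ofReal ((1/2:ℝ)^n)) atTop (𝓝 0) := by
    simpa using ENNReal.Tendsto.const_mul hlim (a := 2^t)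
      (Or.inr (ENNReal.rpow_ne_top_of_nonneg ht.le (by norm_num)))
  refine le_antisymm (hle.trans ?_) zero_le
  rw [← hlim3.liminf_eq]
  exact liminf_le_liminf (Eventually.of_forall hle2)

theorem greedy_weights {X ι : Type*} [DecidableEq X] (C : Finset ι) (B : ι → Set X) (d : ι → ℝ)
    [∀ c, DecidablePred (· ∈ B c)]
    (hd : ∀ c ∈ C, 0 ≤ d c) (A : Finset X) (hA : ∀ x ∈ A, ∃ c ∈ C, x ∈ B c) :
    ∃ w : X → ℝ, (∀ x, 0 ≤ w x) ∧ (∀ x ∉ A, w x = 0) ∧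
      (∀ c ∈ C, ∑ x ∈ A with x ∈ B c, w x ≤ d c) ∧
      ∀ x ∈ A, ∃ c ∈ C, x ∈ B c ∧ ∑ x ∈ A with x ∈ B c, w x = d c := by
  classical
  induction A using Finset.induction_on with
  | empty => exact ⟨fun _ => 0, by simp, by simp, by simpa using hd, by simp⟩
  | insert a A ha ih =>
    obtain ⟨w, hw0, hwA, hwd, hws⟩ := ih (fun x hx => hA x (Finset.mem_insert_of_mem hx))
    obtain ⟨c0, hc0, hac0⟩ := hA a (Finset.mem_insert_self _ _)
    let slack : ι → ℝ := fun c => d c - ∑ x ∈ A with x ∈ B c, w x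
    obtain ⟨c1, hc1, hmin⟩ := Finset.exists_min_image (C.filter (fun c => a ∈ B c)) slack
      ⟨c0, by simp [hc0, hac0]⟩
    simp only [Finset.mem_filter] at hc1 hmin
    have hsl : 0 ≤ slack c1 := by have := hwd c1 hc1.1; simp only [slack]; linarith
    have hsumA : ∀ c, ∑ x ∈ A with x ∈ B c, Function.update w a (slack c1) x =
        ∑ x ∈ A with x ∈ B c, w x := by
      intro c
      refine Finset.sum_congr rfl fun x hx => ?_
      rw [Function.update_of_ne]
      rintro rfl
      exact ha (Finset.mem_filter.1 hx).1
    have hsum : ∀ c, ∑ x ∈ insert a A with x ∈ B c, Function.update w a (slack c1) x =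
        (if a ∈ B c then slack c1 else 0) + ∑ x ∈ A with x ∈ B c, w x := by
      intro c
      rw [Finset.filter_insert]
      split_ifs with h
      · rw [Finset.sum_insert (by simp [ha]), hsumA]; simp
      · rw [hsumA]; simp
    have hle : ∀ c ∈ C, ∑ x ∈ insert a A with x ∈ B c, Function.update w a (slack c1) x ≤ d c := by
      intro c hc
      rw [hsum]
      split_ifs with h
      · have := hmin c ⟨hc, h⟩
        simp only [slack] at this ⊢
        linarith
      · simpa using hwd c hc
    refine ⟨Function.update w a (slack c1), ?_, ?_, hle, ?_⟩
    · intro x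
      by_cases h : x = a
      · subst h; simpa using hsl
      · rw [Function.update_of_ne h]; exact hw0 x
    · intro x hx
      simp only [Finset.mem_insert, not_or] at hx
      rw [Function.update_of_ne hx.1]; exact hwA x hx.2
    · intro x hx
      rcases Finset.mem_insert.1 hx with rfl | hx
      · refine ⟨c1, hc1.1, hc1.2, ?_⟩
        rw [hsum, if_pos hc1.2]; simp [slack]
      · obtain ⟨c, hc, hxc, heq⟩ := hws x hx
        refine ⟨c, hc, hxc, le_antisymm (hle c hc) ?_⟩
        rw [hsum, heq]
        split_ifs
        · linarith
        · simp

open Classical in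
theorem finite_frostman {X : Type*} [MetricSpace X] (S : Set X) (hS : TotallyBounded S) (s : ℝ)
    (k : ℕ) :
    ∃ (A : Finset X) (w : X → ℝ) (u : Finset (X × ℕ)), (A : Set X) ⊆ S ∧ (∀ x, 0 ≤ w x) ∧
      (∀ x ∈ A, ∀ j ≤ k, ∑ y ∈ A with dist y x ≤ (1/2 : ℝ)^j, w y ≤ ((1/2 : ℝ)^j)^s) ∧
      S ⊆ ⋃ c ∈ u, closedBall c.1 (6 * (1/2 : ℝ)^c.2) ∧
      ∑ c ∈ u, ((1/2 : ℝ)^c.2)^s ≤ ∑ x ∈ A, w x := by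
  obtain ⟨A0, hA0S, hA0f, hA0c⟩ := totallyBounded_iff_subset.1 hS _ (dist_mem_uniformity (show (0:ℝ) < (1/2)^k by positivity))
  lift A0 to Finset X using hA0f
  obtain ⟨w, hw0, -, hwle, hweq⟩ := greedy_weights (A0 ×ˢ Finset.range (k+1))
    (fun c : X × ℕ => closedBall c.1 ((1/2 : ℝ)^c.2)) (fun c => ((1/2 : ℝ)^c.2)^s)
    (fun c _ => by positivity) A0
    (fun x hx => ⟨(x, 0), by simpa using hx, by simp⟩)
  let T : Set (X × ℕ) := {c | c ∈ A0 ×ˢ Finset.range (k+1) ∧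
    ∑ x ∈ A0 with x ∈ closedBall c.1 ((1/2 : ℝ)^c.2), w x = ((1/2 : ℝ)^c.2)^s}
  obtain ⟨u, huT, hdisj, hcov⟩ := Vitali.exists_disjoint_subfamily_covering_enlargement_closedBall T
    (fun c => c.1) (fun c => (1/2 : ℝ)^c.2) 1 (fun c _ => pow_le_one₀ (by norm_num) (by norm_num))
    5 (by norm_num)
  have hufin : u.Finite := (Finset.finite_toSet (A0 ×ˢ Finset.range (k+1))).subset
    fun c hc => (huT hc).1
  lift u to Finset (X × ℕ) using hufin
  refine ⟨A0, w, u, hA0S, hw0, ?_, ?_, ?_⟩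
  · intro x hx j hj
    exact hwle (x, j) (by simpa [hx] using Nat.lt_succ_of_le hj)
  · intro z hz
    obtain ⟨x, hx, hzx⟩ := mem_iUnion₂.1 (hA0c hz)
    have hzx' : dist z x < (1/2)^k := hzx
    obtain ⟨c, hc, hxc, heq⟩ := hweq x hx
    obtain ⟨b, hb, hcb⟩ := hcov c ⟨hc, heq⟩
    refine mem_iUnion₂.2 ⟨b, hb, ?_⟩
    have h1 : dist x b.1 ≤ 5 * (1/2)^b.2 := hcb hxc
    have h2 : (1/2:ℝ)^k ≤ (1/2)^b.2 := by
      refine pow_le_pow_of_le_one (by norm_num) (by norm_num) ?_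
      have := (huT hb).1
      simp only [Finset.mem_product, Finset.mem_range] at this
      omega
    rw [mem_closedBall]
    linarith [dist_triangle z x b.1]
  · calc _ = ∑ c ∈ u, ∑ x ∈ A0 with x ∈ closedBall c.1 ((1/2 : ℝ)^c.2), w x :=
          Finset.sum_congr rfl fun c hc => ((huT hc).2).symm
      _ = ∑ x ∈ u.biUnion (fun c => A0.filter (fun x => x ∈ closedBall c.1 ((1/2 : ℝ)^c.2))), w x := by
          rw [Finset.sum_biUnion]
          intro a ha b hb hab
          have := hdisj ha hb hab
          rw [Function.onFun, Finset.disjoint_left]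
          intro x hx hx'
          exact Set.disjoint_left.1 this (Finset.mem_filter.1 hx).2 (Finset.mem_filter.1 hx').2
      _ ≤ _ := by
          refine Finset.sum_le_sum_of_subset_of_nonneg ?_ fun x _ _ => hw0 x
          intro x hx
          obtain ⟨c, _, hc⟩ := Finset.mem_biUnion.1 hx
          exact (Finset.mem_filter.1 hc).1
end HypUnion

namespace HypUnion
open Metric Set Filter Topology
open scoped ENNReal NNReal

theorem sq_sum_le_pairs {X ι : Type*} (A : Finset X) (w : X → ℝ) (hw : ∀ x, 0 ≤ w x) (f : X → ℝ)
    (δ : ℝ) (hδ : 0 < δ) (I : Finset ι) (y : ι → ℝ) (G : Finset X) (hGA : G ⊆ A)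
    (hG : ∀ p ∈ G, ∃ i ∈ I, |f p - y i| ≤ δ) [∀ p, DecidablePred fun q => |f p - f q| ≤ δ] :
    (∑ p ∈ G, w p)^2 ≤ 3 * I.card * ∑ p ∈ A, w p * ∑ q ∈ A with |f p - f q| ≤ δ, w q := by
  classical
  let fl : X → ℤ := fun p => ⌊f p / δ⌋
  let J : Finset ℤ := I.biUnion fun i => Finset.Icc (⌊y i / δ⌋ - 1) (⌊y i / δ⌋ + 1)
  have hJ : (J.card : ℝ) ≤ 3 * I.card := by
    have : J.card ≤ I.card * 3 := by
      refine Finset.card_biUnion_le_card_mul _ _ _ fun i _ => ?_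
      simp only [Int.card_Icc]; omega
    have h2 : (J.card : ℝ) ≤ (I.card * 3 : ℕ) := by exact_mod_cast this
    push_cast at h2; linarith
  have hmaps : ∀ p ∈ G, fl p ∈ J := by
    intro p hp
    obtain ⟨i, hi, hpi⟩ := hG p hp
    refine Finset.mem_biUnion.2 ⟨i, hi, ?_⟩
    rw [abs_le] at hpi
    have h1 : f p / δ ≤ y i / δ + 1 := by
      rw [div_add_one hδ.ne']; gcongr; linarith
    have h2 : y i / δ ≤ f p / δ + 1 := by
      rw [div_add_one hδ.ne']; gcongr; linarith
    have h3 := Int.floor_le_floor h1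
    have h4 := Int.floor_le_floor h2
    rw [Int.floor_add_one] at h3 h4
    simp only [Finset.mem_Icc, fl]
    omega
  have hclose : ∀ p q, fl p = fl q → |f p - f q| ≤ δ := by
    intro p q h
    have := Int.abs_sub_lt_one_of_floor_eq_floor h
    rw [← sub_div, abs_div, abs_of_pos hδ, div_lt_one hδ] at this
    exact this.le
  have hin : ∀ m ∈ J, (∑ p ∈ G with fl p = m, w p)^2 ≤
      ∑ p ∈ G with fl p = m, w p * ∑ q ∈ A with |f p - f q| ≤ δ, w q := by
    intro m _
    rw [sq, Finset.sum_mul]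
    refine Finset.sum_le_sum fun p hp => ?_
    refine mul_le_mul_of_nonneg_left ?_ (hw p)
    refine Finset.sum_le_sum_of_subset_of_nonneg ?_ fun x _ _ => hw x
    intro q hq
    simp only [Finset.mem_filter] at hp hq ⊢
    exact ⟨hGA hq.1, hclose _ _ (hp.2.trans hq.2.symm)⟩
  have hnn : ∀ p, 0 ≤ w p * ∑ q ∈ A with |f p - f q| ≤ δ, w q := fun p =>
    mul_nonneg (hw p) (Finset.sum_nonneg fun q _ => hw q)
  calc (∑ p ∈ G, w p)^2 = (∑ m ∈ J, ∑ p ∈ G with fl p = m, w p)^2 := by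
        rw [Finset.sum_fiberwise_of_maps_to hmaps]
    _ ≤ J.card * ∑ m ∈ J, (∑ p ∈ G with fl p = m, w p)^2 := sq_sum_le_card_mul_sum_sq
    _ ≤ J.card * ∑ m ∈ J, ∑ p ∈ G with fl p = m, w p * ∑ q ∈ A with |f p - f q| ≤ δ, w q := by
        gcongr with m hm; exact hin m hm
    _ = J.card * ∑ p ∈ G, w p * ∑ q ∈ A with |f p - f q| ≤ δ, w q := by
        rw [Finset.sum_fiberwise_of_maps_to hmaps]
    _ ≤ J.card * ∑ p ∈ A, w p * ∑ q ∈ A with |f p - f q| ≤ δ, w q := by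
        gcongr
        exact fun p _ _ => hnn p
    _ ≤ _ := by
        gcongr
        exact Finset.sum_nonneg fun p _ => hnn p

theorem two_mul_le_of_sq_le {S a b l : ℝ} (ha : 0 ≤ a) (hb : 0 ≤ b) (hl : 0 < l)
    (h : S^2 ≤ a * b) : 2 * S ≤ l * a + l⁻¹ * b := by
  refine abs_le_of_sq_le_sq' (a := 2 * S) (b := l * a + l⁻¹ * b) ?_ (by positivity) |>.2
  have : l * l⁻¹ = 1 := mul_inv_cancel₀ hl.ne'
  have e : (l * a + l⁻¹ * b)^2 = (l * a - l⁻¹ * b)^2 + 4 * (l * l⁻¹) * (a * b) := by ring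
  rw [e, this]
  nlinarith [sq_nonneg (l * a - l⁻¹ * b)]

set_option linter.unusedSectionVars false

variable {V : Type*} [NormedAddCommGroup V] [InnerProductSpace ℝ V] [FiniteDimensional ℝ V]
  [MeasurableSpace V] [BorelSpace V]

/-- The part of the unit ball where the affine function `⟪v,x⟫ + b` is at most `δ`. -/
def slab (v : V) (b δ : ℝ) : Set V := {x | x ∈ closedBall (0:V) 1 ∧ |⟪v, x⟫ + b| ≤ δ}

theorem isClosed_slab (v : V) (b δ : ℝ) : IsClosed (slab v b δ) := by
  have h : Continuous fun x : V => |⟪v, x⟫ + b| := by fun_prop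
  exact isClosed_closedBall.inter (isClosed_le h continuous_const)

theorem slab_measure (μ : Measure V) [μ.IsAddHaarMeasure] (v : V) (b δ : ℝ) (hδ : 0 < δ) :
    μ.real (slab v b δ) * max ‖v‖ |b| ≤ 6 * μ.real (closedBall (0:V) 2) * δ := by
  set K := μ.real (closedBall (0:V) 2) with hK
  have hK0 : 0 ≤ K := measureReal_nonneg
  have hsub : slab v b δ ⊆ closedBall 0 2 := fun x hx => closedBall_subset_closedBall (by norm_num) hx.1
  have hfin2 : μ (closedBall (0:V) 2) ≠ ∞ := measure_closedBall_lt_top.ne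
  have hle : μ.real (slab v b δ) ≤ K := measureReal_mono hsub hfin2
  have hinner : ∀ x ∈ slab v b δ, |⟪v, x⟫| ≤ ‖v‖ := by
    intro x hx
    refine (abs_real_inner_le_norm v x).trans ?_
    have : ‖x‖ ≤ 1 := by simpa using hx.1
    nlinarith [norm_nonneg v]
  rcases (slab v b δ).eq_empty_or_nonempty with h | ⟨x0, hx0⟩
  · rw [h]; simp; positivity
  have hb : |b| ≤ ‖v‖ + δ := by
    have h1 := hinner x0 hx0
    have h2 := hx0.2
    rw [abs_le] at *
    constructor <;> linarith
  by_cases hv : ‖v‖ ≤ δ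
  · have : max ‖v‖ |b| ≤ 2 * δ := max_le (by linarith) (by linarith)
    calc _ ≤ K * (2 * δ) := by gcongr
      _ ≤ _ := by nlinarith [mul_nonneg hK0 hδ.le]
  push Not at hv
  have hvpos : 0 < ‖v‖ := hδ.trans hv
  have hmax : max ‖v‖ |b| ≤ 2 * ‖v‖ := max_le (by linarith) (by linarith)
  suffices h : μ.real (slab v b δ) * ‖v‖ ≤ 3 * K * δ by
    calc _ ≤ μ.real (slab v b δ) * (2 * ‖v‖) := by gcongr
      _ ≤ _ := by linarith
  let c : V := (3 * δ / ‖v‖^2) • v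
  have hc : ⟪v, c⟫ = 3 * δ := by
    simp only [c, inner_smul_right, real_inner_self_eq_norm_sq]; field_simp
  have hcn : ‖c‖ = 3 * δ / ‖v‖ := by
    simp only [c, norm_smul, Real.norm_eq_abs]
    rw [abs_of_pos (by positivity)]; field_simp
  let J : ℕ := ⌊‖v‖ / (3 * δ)⌋₊ + 1
  let T : ℕ → Set V := fun j => (fun x => (j : ℝ) • c + x) '' slab v b δ
  have hTμ : ∀ j, μ.real (T j) = μ.real (slab v b δ) := by
    intro j
    simp only [T, image_add_left, Measure.real, measure_preimage_add]
  have hTmeas : ∀ j, MeasurableSet (T j) := by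
    intro j
    simp only [T, image_add_left]
    exact (measurable_const_add _) (isClosed_slab v b δ).measurableSet
  have hTdisj : ∀ i j : ℕ, i < j → Disjoint (T i) (T j) := by
    intro i j hij
    rw [Set.disjoint_left]
    rintro _ ⟨x, hx, rfl⟩ ⟨z, hz, hzx⟩
    have h1 := congrArg (fun u => ⟪v, u⟫) hzx
    simp only [inner_add_right, inner_smul_right, hc] at h1
    have hx2 := hx.2
    have hz2 := hz.2
    rw [abs_le] at hx2 hz2
    have hij' : (i:ℝ) + 1 ≤ j := by exact_mod_cast hij
    nlinarith
  have hTsub : ∀ j ∈ Finset.range J, T j ⊆ closedBall 0 2 := by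
    rintro j hj _ ⟨x, hx, rfl⟩
    have hj' : (j:ℝ) ≤ ‖v‖ / (3 * δ) := by
      have : j ≤ ⌊‖v‖ / (3 * δ)⌋₊ := by have := Finset.mem_range.1 hj; omega
      exact (Nat.le_floor_iff (by positivity)).1 this
    have hx1 : ‖x‖ ≤ 1 := by simpa using hx.1
    simp only [mem_closedBall, dist_zero_right]
    calc ‖(j:ℝ) • c + x‖ ≤ ‖(j:ℝ) • c‖ + ‖x‖ := norm_add_le _ _
      _ = j * (3 * δ / ‖v‖) + ‖x‖ := by rw [norm_smul, hcn]; simp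
      _ ≤ (‖v‖ / (3 * δ)) * (3 * δ / ‖v‖) + 1 := by gcongr
      _ = 2 := by field_simp; norm_num
  have hsum : (J:ℝ) * μ.real (slab v b δ) ≤ K := by
    have h1 : μ.real (⋃ j ∈ Finset.range J, T j) = ∑ j ∈ Finset.range J, μ.real (T j) := by
      refine measureReal_biUnion_finset ?_ (fun j _ => hTmeas j) (fun j hj => ?_)
      · intro i _ j _ hij
        rcases lt_or_gt_of_ne hij with h | h
        · exact hTdisj i j h
        · exact (hTdisj j i h).symm
      · exact measure_ne_top_of_subset (hTsub j hj) hfin2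
    have h2 : μ.real (⋃ j ∈ Finset.range J, T j) ≤ K :=
      measureReal_mono (iUnion₂_subset hTsub) hfin2
    rw [h1] at h2
    simpa [hTμ] using h2
  have hJ : ‖v‖ / (3 * δ) ≤ J := by
    simp only [J]; push_cast; exact (Nat.lt_floor_add_one _).le
  have : ‖v‖ / (3 * δ) * μ.real (slab v b δ) ≤ K :=
    (mul_le_mul_of_nonneg_right hJ measureReal_nonneg).trans hsum
  rw [div_mul_eq_mul_div, div_le_iff₀ (by positivity)] at this
  linarith


theorem slab_pair_bound (μ : Measure V) [μ.IsAddHaarMeasure] (p q : V × ℝ) (k : ℕ)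
    (hpq : dist p q ≤ 1) :
    μ.real (slab (p.1 - q.1) (p.2 - q.2) ((1/2)^k)) ≤
      ∑ j ∈ Finset.range (k+1), if dist q p ≤ (1/2:ℝ)^j then
        12 * μ.real (closedBall (0:V) 2) * (2^j * (1/2)^k) else 0 := by
  set K := μ.real (closedBall (0:V) 2) with hK
  have hK0 : 0 ≤ K := measureReal_nonneg
  have hfin2 : μ (closedBall (0:V) 2) ≠ ∞ := measure_closedBall_lt_top.ne
  have hterm : ∀ j ∈ Finset.range (k+1), 0 ≤ if dist q p ≤ (1/2:ℝ)^j then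
        12 * K * (2^j * (1/2)^k) else 0 := by
    intro j _; split_ifs <;> positivity
  have hone : ∀ j, (2:ℝ)^j * (1/2)^j = 1 := by
    intro j; rw [← mul_pow]; norm_num
  by_cases hr : dist q p ≤ (1/2)^k
  · refine le_trans ?_ (Finset.single_le_sum hterm (Finset.mem_range.2 (Nat.lt_succ_self k)))
    rw [if_pos hr, hone]
    have : μ.real (slab (p.1 - q.1) (p.2 - q.2) ((1/2)^k)) ≤ K :=
      measureReal_mono (fun x hx => closedBall_subset_closedBall (by norm_num) hx.1) hfin2
    linarith
  · push Not at hr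
    have hpos : 0 < dist q p := lt_trans (by positivity) hr
    obtain ⟨j, hj1, hj2⟩ := exists_nat_pow_near_of_lt_one hpos (by rwa [dist_comm]) (y := (1/2:ℝ))
      (by norm_num) (by norm_num)
    have hjk : j < k := by
      by_contra h
      push Not at h
      have : (1/2:ℝ)^j ≤ (1/2)^k := pow_le_pow_of_le_one (by norm_num) (by norm_num) h
      linarith
    refine le_trans ?_ (Finset.single_le_sum hterm (Finset.mem_range.2 (Nat.lt_succ_of_lt hjk)))
    rw [if_pos hj2]
    have h1 := slab_measure μ (p.1 - q.1) (p.2 - q.2) ((1/2)^k) (by positivity)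
    have h2 : max ‖p.1 - q.1‖ |p.2 - q.2| = dist q p := by
      rw [dist_comm, Prod.dist_eq, dist_eq_norm, Real.dist_eq]
    rw [h2] at h1
    have h3 : μ.real (slab (p.1 - q.1) (p.2 - q.2) ((1/2)^k)) * (1/2)^(j+1) ≤ 6 * K * (1/2)^k :=
      le_trans (by gcongr) h1
    have h4 := mul_le_mul_of_nonneg_left h3 (show (0:ℝ) ≤ 2^(j+1) by positivity)
    have h5 := hone (j+1)
    calc μ.real (slab (p.1 - q.1) (p.2 - q.2) ((1/2)^k))
        = 2^(j+1) * (μ.real (slab (p.1 - q.1) (p.2 - q.2) ((1/2)^k)) * (1/2)^(j+1)) := by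
          rw [mul_left_comm, h5, mul_one]
      _ ≤ _ := h4
      _ = _ := by rw [pow_succ]; ring

open Classical in
theorem energy_bound (μ : Measure V) [μ.IsAddHaarMeasure] (A : Finset (V × ℝ)) (w : V × ℝ → ℝ)
    (hw : ∀ x, 0 ≤ w x) (k : ℕ) (s : ℝ) (hs : s ≤ 1)
    (hball : ∀ x ∈ A, ∀ j ≤ k, ∑ y ∈ A with dist y x ≤ (1/2 : ℝ)^j, w y ≤ ((1/2 : ℝ)^j)^s)
    (hdiam : ∀ p ∈ A, ∀ q ∈ A, dist p q ≤ 1) (p : V × ℝ) (hp : p ∈ A) :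
    ∑ q ∈ A, w q * μ.real (slab (p.1 - q.1) (p.2 - q.2) ((1/2)^k)) ≤
      12 * μ.real (closedBall (0:V) 2) * (k+1) * ((1/2:ℝ)^k)^s := by
  set K := μ.real (closedBall (0:V) 2) with hK
  have hK0 : 0 ≤ K := measureReal_nonneg
  calc _ ≤ ∑ q ∈ A, w q * ∑ j ∈ Finset.range (k+1), if dist q p ≤ (1/2:ℝ)^j then
        12 * K * (2^j * (1/2)^k) else 0 := by
        refine Finset.sum_le_sum fun q hq => ?_
        exact mul_le_mul_of_nonneg_left (slab_pair_bound μ p q k (hdiam p hp q hq)) (hw q)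
    _ = ∑ j ∈ Finset.range (k+1), 12 * K * (2^j * (1/2)^k) *
          ∑ q ∈ A with dist q p ≤ (1/2:ℝ)^j, w q := by
        simp_rw [Finset.mul_sum]
        rw [Finset.sum_comm]
        refine Finset.sum_congr rfl fun j _ => ?_
        rw [Finset.sum_filter]
        refine Finset.sum_congr rfl fun q _ => ?_
        split_ifs
        · ring
        · simp
    _ ≤ ∑ j ∈ Finset.range (k+1), 12 * K * ((1/2:ℝ)^k)^s := by
        refine Finset.sum_le_sum fun j hj => ?_
        have hjk : j ≤ k := Nat.lt_succ_iff.1 (Finset.mem_range.1 hj)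
        have h1 := hball p hp j hjk
        calc 12 * K * (2^j * (1/2)^k) * ∑ q ∈ A with dist q p ≤ (1/2:ℝ)^j, w q
            ≤ 12 * K * (2^j * (1/2)^k) * ((1/2 : ℝ)^j)^s := by gcongr
          _ = 12 * K * (2^j * (1/2)^k * ((1/2 : ℝ)^j)^s) := by ring
          _ ≤ _ := by
            refine mul_le_mul_of_nonneg_left ?_ (by positivity)
            have ha : (0:ℝ) < (1/2)^j := by positivity
            have hd : (0:ℝ) < (1/2)^k := by positivity
            have hda : (1/2:ℝ)^k ≤ (1/2)^j := pow_le_pow_of_le_one (by norm_num) (by norm_num) hjk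
            have h2 : ((1/2:ℝ)^k)^(1-s) ≤ ((1/2:ℝ)^j)^(1-s) :=
              Real.rpow_le_rpow hd.le hda (by linarith)
            have e1 : ((1/2:ℝ)^k)^(1-s) * ((1/2:ℝ)^k)^s = (1/2)^k := by
              rw [← Real.rpow_add hd]; simp
            have e2 : ((1/2:ℝ)^j)^(1-s) * ((1/2:ℝ)^j)^s = (1/2)^j := by
              rw [← Real.rpow_add ha]; simp
            have e3 : (2:ℝ)^j * (1/2)^j = 1 := by rw [← mul_pow]; norm_num
            calc (2:ℝ)^j * (1/2)^k * ((1/2 : ℝ)^j)^s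
                = 2^j * (((1/2:ℝ)^k)^(1-s) * ((1/2:ℝ)^k)^s) * ((1/2 : ℝ)^j)^s := by rw [e1]
              _ ≤ 2^j * (((1/2:ℝ)^j)^(1-s) * ((1/2:ℝ)^k)^s) * ((1/2 : ℝ)^j)^s := by gcongr
              _ = 2^j * (((1/2:ℝ)^j)^(1-s) * ((1/2:ℝ)^j)^s) * ((1/2 : ℝ)^k)^s := by ring
              _ = _ := by rw [e2, e3, one_mul]
    _ = _ := by
        rw [Finset.sum_const, Finset.card_range, nsmul_eq_mul]; push_cast; ring

/-- The set of `x` in the unit ball over which the hyperplane `p` meets `F`. -/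
def trace (F : Set (V × ℝ)) (p : V × ℝ) : Set V :=
  {x | x ∈ closedBall (0:V) 1 ∧ (x, ⟪p.1, x⟫ + p.2) ∈ F}

theorem isClosed_trace (F : Set (V × ℝ)) (hF : IsClosed F) (p : V × ℝ) : IsClosed (trace F p) := by
  have h : Continuous fun x : V => (x, ⟪p.1, x⟫ + p.2) := by fun_prop
  exact isClosed_closedBall.inter (hF.preimage h)

theorem incidence_bound {ι : Type*} (μ : Measure V) [μ.IsAddHaarMeasure] (A : Finset (V × ℝ))
    (w : V × ℝ → ℝ) (hw : ∀ x, 0 ≤ w x) (δ : ℝ) (hδ : 0 < δ) (I : Finset ι) (z : ι → V × ℝ)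
    (l : ℝ) (hl : 0 < l) :
    2 * ∑ p ∈ A, w p * μ.real (trace (⋃ i ∈ I, closedBall (z i) δ) p) ≤
      l * (3 * ∑ i ∈ I, μ.real (closedBall (z i).1 δ)) +
      l⁻¹ * ∑ p ∈ A, w p * ∑ q ∈ A, w q * μ.real (slab (p.1 - q.1) (p.2 - q.2) δ) := by
  classical
  set F := ⋃ i ∈ I, closedBall (z i) δ with hF
  have hFc : IsClosed F := I.finite_toSet.isClosed_biUnion fun i _ => isClosed_closedBall
  have hfin : ∀ S : Set V, S ⊆ closedBall 0 1 → μ S ≠ ∞ := fun S hS =>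
    measure_ne_top_of_subset hS measure_closedBall_lt_top.ne
  have hfinT : ∀ p, μ (trace F p) ≠ ∞ := fun p => hfin _ fun x hx => hx.1
  have hfinS : ∀ v b, μ (slab v b δ) ≠ ∞ := fun v b => hfin _ fun x hx => hx.1
  have hmT : ∀ p, MeasurableSet (trace F p) := fun p => (isClosed_trace F hFc p).measurableSet
  have hmS : ∀ (v : V) b, MeasurableSet (slab v b δ) := fun v b => (isClosed_slab v b δ).measurableSet
  have hIntg : ∀ S : Set V, MeasurableSet S → μ S ≠ ∞ →
      Integrable (S.indicator (fun _ => (1:ℝ))) μ := by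
    intro S hS hS'
    exact (integrable_indicator_iff hS).2 (integrableOn_const hS')
  have hval : ∀ S : Set V, MeasurableSet S → ∫ x, S.indicator (fun _ => (1:ℝ)) x ∂μ = μ.real S := by
    intro S hS
    simpa using integral_indicator_const (μ := μ) (1:ℝ) hS
  have hiT := fun p => hIntg _ (hmT p) (hfinT p)
  have hiS := fun v b => hIntg _ (hmS v b) (hfinS v b)
  have hiB : ∀ i, Integrable ((closedBall (z i).1 δ).indicator (fun _ => (1:ℝ))) μ := fun i =>
    hIntg _ measurableSet_closedBall measure_closedBall_lt_top.ne
  have hpt : ∀ x, 2 * ∑ p ∈ A, w p * (trace F p).indicator (fun _ => (1:ℝ)) x ≤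
      l * (3 * ∑ i ∈ I, (closedBall (z i).1 δ).indicator (fun _ => (1:ℝ)) x) +
      l⁻¹ * ∑ p ∈ A, w p * ∑ q ∈ A, w q *
        (slab (p.1 - q.1) (p.2 - q.2) δ).indicator (fun _ => (1:ℝ)) x := by
    intro x
    have hN : 0 ≤ ∑ i ∈ I, (closedBall (z i).1 δ).indicator (fun _ => (1:ℝ)) x :=
      Finset.sum_nonneg fun i _ => indicator_nonneg (fun _ _ => zero_le_one) _
    have hR : 0 ≤ ∑ p ∈ A, w p * ∑ q ∈ A, w q *
        (slab (p.1 - q.1) (p.2 - q.2) δ).indicator (fun _ => (1:ℝ)) x :=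
      Finset.sum_nonneg fun p _ => mul_nonneg (hw p) <| Finset.sum_nonneg fun q _ =>
        mul_nonneg (hw q) <| indicator_nonneg (fun _ _ => zero_le_one) _
    refine two_mul_le_of_sq_le (by positivity) hR hl ?_
    by_cases hx : x ∈ closedBall (0:V) 1
    swap
    · have : ∑ p ∈ A, w p * (trace F p).indicator (fun _ => (1:ℝ)) x = 0 := by
        refine Finset.sum_eq_zero fun p _ => ?_
        rw [indicator_of_notMem (fun h => hx h.1), mul_zero]
      rw [this]
      have := mul_nonneg (mul_nonneg (by norm_num : (0:ℝ) ≤ 3) hN) hR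
      simpa using this
    have key := sq_sum_le_pairs A w hw (fun p => ⟪p.1, x⟫ + p.2) δ hδ
      (I.filter fun i => x ∈ closedBall (z i).1 δ) (fun i => (z i).2)
      (A.filter fun p => x ∈ trace F p) (Finset.filter_subset _ _) (by
        intro p hp
        have h1 := (Finset.mem_filter.1 hp).2.2
        obtain ⟨i, hi, hpi⟩ := mem_iUnion₂.1 h1
        rw [mem_closedBall, Prod.dist_eq, max_le_iff] at hpi
        refine ⟨i, Finset.mem_filter.2 ⟨hi, hpi.1⟩, ?_⟩
        simpa [Real.dist_eq] using hpi.2)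
    convert key using 2
    · rw [Finset.sum_filter]
      refine Finset.sum_congr rfl fun p _ => ?_
      simp [indicator_apply]
    · rw [Finset.card_filter]
      push_cast
      simp [indicator_apply]
    · refine Finset.sum_congr rfl fun p _ => ?_
      congr 1
      rw [Finset.sum_filter]
      refine Finset.sum_congr rfl fun q _ => ?_
      have : x ∈ slab (p.1 - q.1) (p.2 - q.2) δ ↔ |⟪p.1, x⟫ + p.2 - (⟪q.1, x⟫ + q.2)| ≤ δ := by
        simp only [slab, mem_ofPred_eq, hx, true_and, inner_sub_left]
        rw [show ⟪p.1, x⟫ - ⟪q.1, x⟫ + (p.2 - q.2) = ⟪p.1, x⟫ + p.2 - (⟪q.1, x⟫ + q.2) by ring]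
      simp [indicator_apply, this]
  have hI1 : Integrable (fun x => 2 * ∑ p ∈ A, w p * (trace F p).indicator (fun _ => (1:ℝ)) x) μ :=
    (integrable_finsetSum _ fun p _ => (hiT p).const_mul _).const_mul _
  have hI2 : Integrable (fun x => l * (3 * ∑ i ∈ I, (closedBall (z i).1 δ).indicator (fun _ => (1:ℝ)) x)) μ :=
    ((integrable_finsetSum _ fun i _ => hiB i).const_mul _).const_mul _
  have hI3' : ∀ p : V × ℝ, Integrable (fun x => ∑ q ∈ A, w q *
        (slab (p.1 - q.1) (p.2 - q.2) δ).indicator (fun _ => (1:ℝ)) x) μ := fun p =>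
    integrable_finsetSum _ fun q _ => (hiS _ _).const_mul _
  have hI3 : Integrable (fun x => l⁻¹ * ∑ p ∈ A, w p * ∑ q ∈ A, w q *
        (slab (p.1 - q.1) (p.2 - q.2) δ).indicator (fun _ => (1:ℝ)) x) μ :=
    (integrable_finsetSum _ fun p _ => (hI3' p).const_mul _).const_mul _
  have := integral_mono hI1 (hI2.add hI3) hpt
  simp only [Pi.add_apply] at this
  rw [integral_add hI2 hI3, integral_const_mul, integral_const_mul, integral_const_mul,
    integral_const_mul, integral_finsetSum _ fun p _ => (hiT p).const_mul _,
    integral_finsetSum _ fun i _ => hiB i,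
    integral_finsetSum _ fun p _ => (hI3' p).const_mul _] at this
  simp_rw [integral_const_mul] at this
  have h3 : ∀ p : V × ℝ, ∫ x, ∑ q ∈ A, w q *
        (slab (p.1 - q.1) (p.2 - q.2) δ).indicator (fun _ => (1:ℝ)) x ∂μ =
        ∑ q ∈ A, w q * μ.real (slab (p.1 - q.1) (p.2 - q.2) δ) := by
    intro p
    rw [integral_finsetSum _ fun q _ => (hiS _ _).const_mul _]
    simp_rw [integral_const_mul]
    exact Finset.sum_congr rfl fun q _ => by rw [hval _ (hmS _ _)]
  simp_rw [h3] at this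
  simpa only [hval _ (hmT _), hval _ measurableSet_closedBall] using this

end HypUnion

namespace HypUnion
open Metric Set Filter Topology
open scoped ENNReal NNReal

theorem lower_main {V : Type} [NormedAddCommGroup V] [InnerProductSpace ℝ V] [FiniteDimensional ℝ V]
    [MeasurableSpace V] [BorelSpace V] (μ : Measure V) [μ.IsAddHaarMeasure]
    (E L : Set (V × ℝ)) (hL : ∀ p ∈ E, ∀ x, (x, ⟪p.1, x⟫ + p.2) ∈ L)
    (s t : ℝ) (hs0 : 0 < s) (hs1 : s ≤ 1) (ht : 0 < t) (hst : t < s + Module.finrank ℝ V)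
    (hdiam : ∀ p ∈ E, ∀ q ∈ E, dist p q ≤ 1) (hE : μH[s] E ≠ 0) : μH[t] L ≠ 0 := by
  classical
  intro h0
  set m := Module.finrank ℝ V with hm
  set η : ℝ := (s + m - t) / 4 with hη
  have hηpos : 0 < η := by rw [hη]; linarith
  set a : ℝ := (1/2 : ℝ)^η with ha
  have ha0 : 0 < a := by positivity
  have ha1 : a < 1 := Real.rpow_lt_one (by norm_num) (by norm_num) hηpos
  have hak : ∀ k : ℕ, ((1/2:ℝ)^k)^η = a^k := by
    intro k
    rw [ha, ← Real.rpow_natCast, ← Real.rpow_natCast, ← Real.rpow_mul (by norm_num),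
      ← Real.rpow_mul (by norm_num), mul_comm]
  set β := μ.real (closedBall (0:V) 1) with hβ
  have hβpos : 0 < β := ENNReal.toReal_pos (measure_closedBall_pos μ _ one_pos).ne'
    measure_closedBall_lt_top.ne
  set D := 12 * μ.real (closedBall (0:V) 2) with hD
  have hDpos : 0 < D := mul_pos (by norm_num) <| ENNReal.toReal_pos
    (measure_closedBall_pos μ _ two_pos).ne' measure_closedBall_lt_top.ne
  have hgeo : ∀ b : ℝ, 0 ≤ b → ∑' k : ℕ, ENNReal.ofReal (b * a^k) = ENNReal.ofReal (b / (1 - a)) := by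
    intro b hb
    rw [← ENNReal.ofReal_tsum_of_nonneg (fun k => by positivity)
      ((summable_geometric_of_lt_one ha0.le ha1).mul_left b), tsum_mul_left,
      tsum_geometric_of_lt_one ha0.le ha1, div_eq_mul_inv]
  have h1a : 0 < 1 - a := by linarith
  set c := β * (1 - a) / 2 with hc
  have hcpos : 0 < c := by positivity
  -- content lower bound
  obtain ⟨κ, hκ, hcontent⟩ : ∃ κ : ℝ, 0 < κ ∧ ∀ (ι : Type) (_ : Countable ι) (x : ι → V × ℝ) (r : ι → ℝ),
      (∀ i, 0 ≤ r i) → E ⊆ ⋃ i, closedBall (x i) (r i) →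
      ENNReal.ofReal κ < ∑' i, ENNReal.ofReal ((r i)^s) := by
    by_contra hcon
    push Not at hcon
    refine hE (null_of_cover E s hs0 fun e he => ?_)
    obtain ⟨ι, hι, x, r, h1, h2, h3⟩ := hcon e he
    exact ⟨ι, hι, x, r, h1, h2, h3⟩
  set c' := κ * (1 - a) / 6^s with hc'
  have hc'pos : 0 < c' := by positivity
  -- choice of k0
  obtain ⟨k0, hk0⟩ : ∃ k0 : ℕ, ∀ k ≥ k0, 3 * β * D * ((k+1) * a^k) < c^2 * c' := by
    have h1 : Tendsto (fun k : ℕ => 3 * β * D * (((k:ℝ)+1) * a^k)) atTop (𝓝 (3 * β * D * (0 + 0))) := by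
      refine Tendsto.const_mul _ ?_
      simp_rw [add_mul, one_mul]
      exact (tendsto_self_mul_const_pow_of_lt_one ha0.le ha1).add
        (tendsto_pow_atTop_nhds_zero_of_lt_one ha0.le ha1)
    rw [add_zero, mul_zero] at h1
    exact eventually_atTop.1 (h1.eventually (gt_mem_nhds (by positivity)))
  obtain ⟨z, κs, hcov, hsum⟩ := cover_of_null L t ht h0 (((1/2:ℝ)^k0)^t) (by positivity)
  have hρ0 : ((1/2:ℝ)^k0)^t ≤ 1 := Real.rpow_le_one (by positivity)
    (pow_le_one₀ (by norm_num) (by norm_num)) ht.le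
  have hκs : ∀ i, k0 ≤ κs i := by
    intro i
    have h1 := (ENNReal.le_tsum i).trans hsum
    rw [ENNReal.ofReal_le_ofReal_iff (by positivity)] at h1
    have h2 := (Real.rpow_le_rpow_iff (by positivity) (by positivity) ht).1 h1
    exact (pow_le_pow_iff_right_of_lt_one₀ (by norm_num) (by norm_num)).1 h2
  have hfin : ∀ k, {i | κs i = k}.Finite := by
    intro k
    have h1 := ENNReal.finite_const_le_of_tsum_ne_top
      (ne_top_of_le_ne_top ENNReal.ofReal_ne_top hsum)
      (ε := ENNReal.ofReal (((1/2:ℝ)^k)^t)) (by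
        have : 0 < ((1/2:ℝ)^k)^t := by positivity
        simpa using this)
    refine h1.subset fun i hi => ?_
    have : κs i = k := hi
    simp [this]
  let I : ℕ → Finset ℕ := fun k => (hfin k).toFinset
  have hI : ∀ k i, i ∈ I k ↔ κs i = k := by intro k i; simp [I]
  have hIcard : ∀ k, ((I k).card : ℝ) * ((1/2:ℝ)^k)^t ≤ 1 := by
    intro k
    have h1 := (ENNReal.sum_le_tsum (I k)).trans hsum
    have h2 : ∑ i ∈ I k, ENNReal.ofReal (((1/2 : ℝ)^(κs i))^t) =
        ENNReal.ofReal ((I k).card * ((1/2:ℝ)^k)^t) := by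
      rw [Finset.sum_congr rfl fun i hi => by rw [(hI k i).1 hi], Finset.sum_const, nsmul_eq_mul,
        ENNReal.ofReal_mul (by positivity), ENNReal.ofReal_natCast]
    rw [h2, ENNReal.ofReal_le_ofReal_iff (by positivity)] at h1
    linarith
  let F : ℕ → Set (V × ℝ) := fun k => ⋃ i ∈ I k, closedBall (z i) ((1/2:ℝ)^k)
  let Ek : ℕ → Set (V × ℝ) := fun k => {p | p ∈ E ∧ c * a^k ≤ μ.real (trace (F k) p)}
  have hEk : ∀ p ∈ E, ∃ k, p ∈ Ek k := by
    intro p hp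
    by_contra hcon
    simp only [Ek, mem_ofPred_eq, not_exists, not_and, not_le] at hcon
    have h1 : closedBall (0:V) 1 ⊆ ⋃ k, trace (F k) p := by
      intro x hx
      obtain ⟨i, hi⟩ := mem_iUnion.1 (hcov (hL p hp x))
      refine mem_iUnion.2 ⟨κs i, hx, ?_⟩
      exact mem_iUnion₂.2 ⟨i, (hI _ _).2 rfl, hi⟩
    have h2 : ENNReal.ofReal β ≤ ENNReal.ofReal (c / (1 - a)) := by
      rw [← hgeo c hcpos.le]
      calc ENNReal.ofReal β = μ (closedBall (0:V) 1) := ENNReal.ofReal_toReal measure_closedBall_lt_top.ne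
        _ ≤ μ (⋃ k, trace (F k) p) := measure_mono h1
        _ ≤ ∑' k, μ (trace (F k) p) := measure_iUnion_le _
        _ ≤ _ := by
          refine ENNReal.tsum_le_tsum fun k => ?_
          have hft : μ (trace (F k) p) ≠ ∞ :=
            measure_ne_top_of_subset (fun x hx => hx.1) (measure_closedBall_lt_top (x := (0:V)) (r := 1)).ne
          rw [← ENNReal.ofReal_toReal hft]
          exact ENNReal.ofReal_le_ofReal (hcon k hp).le
    rw [ENNReal.ofReal_le_ofReal_iff (by positivity), hc] at h2
    rw [le_div_iff₀ h1a] at h2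
    nlinarith
  have hEk0 : ∀ k, ∀ p ∈ Ek k, k0 ≤ k := by
    intro k p hp
    have h1 : 0 < μ.real (trace (F k) p) := lt_of_lt_of_le (by positivity) hp.2
    obtain ⟨x, hx⟩ : (trace (F k) p).Nonempty := by
      rw [nonempty_iff_ne_empty]; intro h; rw [h] at h1; simp at h1
    obtain ⟨i, hi, -⟩ := mem_iUnion₂.1 hx.2
    rw [← (hI k i).1 hi]; exact hκs i
  have hEtb : TotallyBounded E := by
    have hb : Bornology.IsBounded E := isBounded_iff.2 ⟨1, fun p hp q hq => hdiam p hp q hq⟩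
    exact hb.isCompact_closure.totallyBounded.subset subset_closure
  have hfr := fun k => finite_frostman (Ek k) (hEtb.subset fun p hp => hp.1) s k
  choose A w u hAE hw hball hucov husum using hfr
  obtain ⟨k, hk⟩ : ∃ k, c' * a^k ≤ ∑ x ∈ A k, w k x := by
    by_contra hcon
    push Not at hcon
    have h1 := hcontent (Σ k, u k) inferInstance (fun j => j.2.1.1) (fun j => 6 * (1/2:ℝ)^j.2.1.2)
      (fun j => by positivity) (by
        intro p hp
        obtain ⟨k, hk⟩ := hEk p hp
        obtain ⟨d, hd, hpd⟩ := mem_iUnion₂.1 (hucov k hk)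
        exact mem_iUnion.2 ⟨⟨k, ⟨d, hd⟩⟩, hpd⟩)
    refine absurd h1 (not_lt.2 ?_)
    rw [ENNReal.tsum_sigma (fun k (d : u k) => ENNReal.ofReal ((6 * (1/2:ℝ)^d.1.2)^s))]
    calc _ ≤ ∑' k : ℕ, ENNReal.ofReal ((6^s * c') * a^k) := by
          refine ENNReal.tsum_le_tsum fun k => ?_
          rw [tsum_fintype, ← ENNReal.ofReal_sum_of_nonneg (fun i _ => by positivity)]
          refine ENNReal.ofReal_le_ofReal ?_
          rw [Finset.sum_coe_sort (u k) (fun d => (6 * (1/2:ℝ)^d.2)^s)]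
          have : ∀ d ∈ u k, (6 * (1/2:ℝ)^d.2)^s = 6^s * ((1/2:ℝ)^d.2)^s := fun d _ =>
            Real.mul_rpow (by norm_num) (by positivity)
          rw [Finset.sum_congr rfl this, ← Finset.mul_sum, mul_assoc]
          exact mul_le_mul_of_nonneg_left ((husum k).trans (hcon k).le) (by positivity)
      _ = ENNReal.ofReal κ := by
          rw [hgeo _ (by positivity), hc']
          congr 1
          field_simp
  set M := ∑ x ∈ A k, w k x with hM
  have hMpos : 0 < M := lt_of_lt_of_le (by positivity) hk
  have hk0k : k0 ≤ k := by
    obtain ⟨p, hp⟩ : (A k).Nonempty := by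
      rw [Finset.nonempty_iff_ne_empty]; intro h; rw [hM, h] at hMpos; simp at hMpos
    exact hEk0 k p (hAE k hp)
  set δ : ℝ := (1/2)^k with hδ
  have hδpos : 0 < δ := by positivity
  set θ := c * a^k with hθ
  have hθpos : 0 < θ := by positivity
  set Y := D * (k+1) * δ^s with hY
  have hYpos : 0 < Y := by positivity
  have hinc := incidence_bound μ (A k) (w k) (hw k) δ hδpos (I k) z (Y/θ) (by positivity)
  have hb1 : θ * M ≤ ∑ p ∈ A k, w k p * μ.real (trace (⋃ i ∈ I k, closedBall (z i) δ) p) := by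
    rw [hM, Finset.mul_sum]
    refine Finset.sum_le_sum fun p hp => ?_
    rw [mul_comm]
    exact mul_le_mul_of_nonneg_left (hAE k hp).2 (hw k p)
  have hb2 : ∑ i ∈ I k, μ.real (closedBall (z i).1 δ) = (I k).card * (δ^m * β) := by
    rw [Finset.sum_congr rfl fun i _ => show μ.real (closedBall (z i).1 δ) = δ^m * β from ?_,
      Finset.sum_const, nsmul_eq_mul]
    rw [hβ, Measure.real, Measure.real, Measure.addHaar_closedBall _ _ hδpos.le,
      Measure.addHaar_closedBall _ _ zero_le_one, ENNReal.toReal_mul, ENNReal.toReal_mul,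
      ENNReal.toReal_ofReal (by positivity), ENNReal.toReal_ofReal (by positivity)]
    simp [hm]
  have hb3 : ∑ p ∈ A k, w k p * ∑ q ∈ A k, w k q * μ.real (slab (p.1 - q.1) (p.2 - q.2) δ) ≤ M * Y := by
    rw [hM, Finset.sum_mul]
    refine Finset.sum_le_sum fun p hp => ?_
    refine mul_le_mul_of_nonneg_left ?_ (hw k p)
    exact energy_bound μ (A k) (w k) (hw k) k s hs1 (hball k)
      (fun p hp q hq => hdiam p (hAE k hp).1 q (hAE k hq).1) p hp
  rw [hb2] at hinc
  have hb4 : (Y/θ)⁻¹ * ∑ p ∈ A k, w k p * ∑ q ∈ A k, w k q * μ.real (slab (p.1 - q.1) (p.2 - q.2) δ)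
      ≤ θ * M := by
    calc _ ≤ (Y/θ)⁻¹ * (M * Y) := by gcongr
      _ = θ * M := by field_simp
  have hb5 : θ * M ≤ Y/θ * (3 * ((I k).card * (δ^m * β))) := by linarith
  have hb6 : θ^2 * M ≤ Y * (3 * ((I k).card * (δ^m * β))) := by
    have := mul_le_mul_of_nonneg_left hb5 hθpos.le
    calc θ^2 * M = θ * (θ * M) := by ring
      _ ≤ _ := this
      _ = _ := by field_simp
  have hδ4 : δ^s * δ^m = a^k * a^k * a^k * a^k * δ^t := by
    rw [← hak k, ← hδ, ← Real.rpow_natCast δ m, ← Real.rpow_add hδpos, ← Real.rpow_add hδpos,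
      ← Real.rpow_add hδpos, ← Real.rpow_add hδpos, ← Real.rpow_add hδpos]
    congr 1
    rw [hη]; ring
  have hak0 : 0 < a^k := by positivity
  have hb7 : θ^2 * M ≤ 3 * β * D * (k+1) * (a^k * a^k * a^k * a^k) := by
    calc _ ≤ _ := hb6
      _ = 3 * β * D * (k+1) * (δ^s * δ^m) * (I k).card := by rw [hY]; ring
      _ = 3 * β * D * (k+1) * (a^k * a^k * a^k * a^k) * ((I k).card * δ^t) := by rw [hδ4]; ring
      _ ≤ 3 * β * D * (k+1) * (a^k * a^k * a^k * a^k) * 1 := by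
        gcongr
        exact hIcard k
      _ = _ := mul_one _
  have hb8 : (c^2 * c') * (a^k * a^k * a^k) ≤ (3 * β * D * ((k+1) * a^k)) * (a^k * a^k * a^k) := by
    calc _ = θ^2 * (c' * a^k) := by rw [hθ]; ring
      _ ≤ θ^2 * M := by gcongr
      _ ≤ _ := hb7
      _ = _ := by ring
  have hb9 := le_of_mul_le_mul_right hb8 (by positivity)
  exact absurd (hk0 k hk0k) (not_lt.2 hb9)

end HypUnion
namespace HypUnion
open Metric Set Filter Topology
open scoped ENNReal NNReal

theorem exists_net {V : Type} [NormedAddCommGroup V] [InnerProductSpace ℝ V] [FiniteDimensional ℝ V]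
    [MeasurableSpace V] [BorelSpace V] (μ : Measure V) [μ.IsAddHaarMeasure]
    (R ρ : ℝ) (hR : 0 ≤ R) (hρ : 0 < ρ) (hρ1 : ρ ≤ 1) :
    ∃ N : Finset V, closedBall (0:V) R ⊆ ⋃ b ∈ N, closedBall b ρ ∧
      (N.card : ℝ) * ρ ^ (Module.finrank ℝ V) ≤ (5 * (R + 1)) ^ (Module.finrank ℝ V) := by
  classical
  obtain ⟨A0, hA0S, hA0f, hA0c⟩ := totallyBounded_iff_subset.1
    (isCompact_closedBall (0:V) R).totallyBounded _ (dist_mem_uniformity (show (0:ℝ) < ρ/5 by positivity))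
  obtain ⟨u, huT, hdisj, hcov⟩ := Vitali.exists_disjoint_subfamily_covering_enlargement_closedBall A0
    (fun c => c) (fun _ => ρ/5) (ρ/5) (fun c _ => le_rfl) 5 (by norm_num)
  have hufin : u.Finite := hA0f.subset huT
  lift u to Finset V using hufin
  refine ⟨u, ?_, ?_⟩
  · intro x hx
    obtain ⟨y, hy, hxy⟩ := mem_iUnion₂.1 (hA0c hx)
    obtain ⟨b, hb, hyb⟩ := hcov y hy
    refine mem_iUnion₂.2 ⟨b, hb, ?_⟩
    have h1 : dist x y < ρ/5 := hxy
    have h2 := hyb (mem_closedBall.2 h1.le)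
    rwa [mul_div_cancel₀ _ (by norm_num)] at h2
  · set m := Module.finrank ℝ V
    have hβpos : 0 < μ.real (closedBall (0:V) 1) :=
      ENNReal.toReal_pos (measure_closedBall_pos μ _ one_pos).ne' measure_closedBall_lt_top.ne
    have hvol : ∀ (x : V) (r : ℝ), 0 ≤ r → μ.real (closedBall x r) = r^m * μ.real (closedBall (0:V) 1) := by
      intro x r hr
      rw [Measure.real, Measure.real, Measure.addHaar_closedBall _ _ hr,
        Measure.addHaar_closedBall _ _ zero_le_one, ENNReal.toReal_mul, ENNReal.toReal_mul,
        ENNReal.toReal_ofReal (by positivity), ENNReal.toReal_ofReal (by positivity)]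
      simp [m]
    have h1 : μ.real (⋃ j ∈ u, closedBall j (ρ/5)) = ∑ j ∈ u, μ.real (closedBall j (ρ/5)) :=
      measureReal_biUnion_finset hdisj (fun j _ => measurableSet_closedBall)
        (fun j hj => measure_closedBall_lt_top.ne)
    have h2 : μ.real (⋃ j ∈ u, closedBall j (ρ/5)) ≤ μ.real (closedBall (0:V) (R+1)) := by
      refine measureReal_mono (iUnion₂_subset fun j hj => ?_) measure_closedBall_lt_top.ne
      refine closedBall_subset_closedBall' ?_
      have : dist j 0 ≤ R := hA0S (huT hj)
      linarith
    rw [h1, Finset.sum_congr rfl fun j _ => hvol j (ρ/5) (by positivity), Finset.sum_const,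
      nsmul_eq_mul, hvol 0 (R+1) (by positivity), ← mul_assoc] at h2
    have h3 := le_of_mul_le_mul_right h2 hβpos
    have h4 : ρ^m = 5^m * (ρ/5)^m := by rw [← mul_pow]; congr 1; ring
    rw [h4, mul_pow]
    calc (u.card : ℝ) * (5^m * (ρ/5)^m) = 5^m * (u.card * (ρ/5)^m) := by ring
      _ ≤ _ := by gcongr

theorem upper_null {V : Type} [NormedAddCommGroup V] [InnerProductSpace ℝ V] [FiniteDimensional ℝ V]
    [MeasurableSpace V] [BorelSpace V] (μ : Measure V) [μ.IsAddHaarMeasure]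
    (E : Set (V × ℝ)) (s : ℝ) (hs : 0 < s) (hE : μH[s] E = 0) (R : ℝ) (hR : 0 ≤ R) :
    μH[s + Module.finrank ℝ V] {q : V × ℝ | ‖q.1‖ ≤ R ∧ ∃ p ∈ E, ‖p.1‖ ≤ R ∧ q.2 = ⟪p.1, q.1⟫ + p.2} = 0 := by
  classical
  set m := Module.finrank ℝ V
  set C : ℝ := (5 * (R + 1)) ^ m * (2 * R + 2)^(s + m) with hC
  have hCpos : 0 < C := by positivity
  refine null_of_cover _ _ (by positivity) fun e he => ?_
  obtain ⟨z, κ, hcov, hsum⟩ := cover_of_null E s hs hE (e / C) (by positivity)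
  have hρ1 : ∀ i, (1/2:ℝ)^(κ i) ≤ 1 := fun i => pow_le_one₀ (by norm_num) (by norm_num)
  choose N hN hNc using fun i => exists_net μ R ((1/2:ℝ)^(κ i)) hR (by positivity) (hρ1 i)
  refine ⟨Σ i, N i, inferInstance, fun j => (j.2.1, ⟪(z j.1).1, j.2.1⟫ + (z j.1).2),
    fun j => (2 * R + 2) * (1/2:ℝ)^(κ j.1), fun j => by positivity, ?_, ?_⟩
  · rintro ⟨x, y⟩ ⟨hx, p, hp, hpR, hy⟩
    obtain ⟨i, hi⟩ := mem_iUnion.1 (hcov hp)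
    obtain ⟨b, hb, hxb⟩ := mem_iUnion₂.1 (hN i (show x ∈ closedBall 0 R by simpa using hx))
    refine mem_iUnion.2 ⟨⟨i, ⟨b, hb⟩⟩, ?_⟩
    simp only at hx hy hxb ⊢
    set ρ := (1/2:ℝ)^(κ i) with hρ
    have hρ0 : 0 < ρ := by positivity
    have hρ1' : ρ ≤ 1 := hρ1 i
    rw [mem_closedBall, Prod.dist_eq, max_le_iff] at hi ⊢
    rw [mem_closedBall] at hxb
    constructor
    · refine hxb.trans ?_
      nlinarith
    · have h1 : ‖p.1 - (z i).1‖ ≤ ρ := by rw [← dist_eq_norm]; exact hi.1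
      have h2 : |p.2 - (z i).2| ≤ ρ := hi.2
      have h3 : ‖(z i).1‖ ≤ R + 1 := by
        have := norm_sub_norm_le (z i).1 p.1
        rw [norm_sub_rev] at this
        linarith
      have h4 : |⟪p.1 - (z i).1, x⟫| ≤ ρ * R := (abs_real_inner_le_norm _ _).trans (by gcongr)
      have h5 : |⟪(z i).1, x - b⟫| ≤ (R + 1) * ρ :=
        (abs_real_inner_le_norm _ _).trans (by rw [dist_eq_norm] at hxb; gcongr)
      rw [hy, Real.dist_eq]
      have h6 : ⟪p.1, x⟫ + p.2 - (⟪(z i).1, b⟫ + (z i).2) =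
          ⟪p.1 - (z i).1, x⟫ + ⟪(z i).1, x - b⟫ + (p.2 - (z i).2) := by
        rw [inner_sub_left, inner_sub_right]; ring
      rw [h6]
      calc _ ≤ |⟪p.1 - (z i).1, x⟫| + |⟪(z i).1, x - b⟫| + |p.2 - (z i).2| := abs_add_three _ _ _
        _ ≤ ρ * R + (R + 1) * ρ + ρ := by gcongr
        _ = _ := by ring
  · rw [ENNReal.tsum_sigma (fun i (_ : N i) => ENNReal.ofReal (((2 * R + 2) * (1/2:ℝ)^(κ i))^(s+m)))]
    calc _ ≤ ∑' i, ENNReal.ofReal C * ENNReal.ofReal (((1/2:ℝ)^(κ i))^s) := by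
          refine ENNReal.tsum_le_tsum fun i => ?_
          rw [tsum_fintype, Finset.sum_const, Finset.card_univ, Fintype.card_coe, nsmul_eq_mul,
            ← ENNReal.ofReal_natCast, ← ENNReal.ofReal_mul (by positivity),
            ← ENNReal.ofReal_mul (by positivity)]
          refine ENNReal.ofReal_le_ofReal ?_
          have hρ0 : (0:ℝ) < (1/2:ℝ)^(κ i) := by positivity
          rw [Real.mul_rpow (by positivity) hρ0.le, Real.rpow_add hρ0, Real.rpow_natCast]
          calc _ = ((N i).card * ((1/2:ℝ)^(κ i))^m) * ((2 * R + 2)^(s+m) * ((1/2:ℝ)^(κ i))^s) := by ring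
            _ ≤ (5 * (R + 1)) ^ m * ((2 * R + 2)^(s+m) * ((1/2:ℝ)^(κ i))^s) :=
                mul_le_mul_of_nonneg_right (hNc i) (by positivity)
            _ = _ := by rw [hC]; ring
      _ ≤ ENNReal.ofReal C * ENNReal.ofReal (e / C) := by
          rw [ENNReal.tsum_mul_left]; gcongr
      _ = ENNReal.ofReal e := by
          rw [← ENNReal.ofReal_mul hCpos.le, mul_div_cancel₀ _ hCpos.ne']

theorem upper_dim {V : Type} [NormedAddCommGroup V] [InnerProductSpace ℝ V] [FiniteDimensional ℝ V]
    [MeasurableSpace V] [BorelSpace V] (μ : Measure V) [μ.IsAddHaarMeasure]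
    (E L : Set (V × ℝ)) (hL : ∀ q ∈ L, ∃ p ∈ E, q.2 = ⟪p.1, q.1⟫ + p.2) :
    dimH L ≤ dimH E + (Module.finrank ℝ V : ℝ≥0∞) := by
  by_contra hcon
  push Not at hcon
  obtain ⟨r, hr1, hr2⟩ := ENNReal.lt_iff_exists_nnreal_btwn.1 hcon
  set m := Module.finrank ℝ V
  have hmr : (m : ℝ≥0) ≤ r := by
    have : (m : ℝ≥0∞) < r := lt_of_le_of_lt le_add_self hr1
    have h2 : ((m : ℝ≥0) : ℝ≥0∞) < r := by simpa using this
    exact (ENNReal.coe_lt_coe.1 h2).le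
  obtain ⟨d, rfl⟩ : ∃ d : ℝ≥0, r = d + m := ⟨r - m, (tsub_add_cancel_of_le hmr).symm⟩
  have hd : dimH E < d := by
    push_cast at hr1
    exact lt_of_add_lt_add_right hr1
  have hd0 : (0:ℝ) < d := by
    have : (0:ℝ≥0∞) < d := lt_of_le_of_lt zero_le hd
    exact_mod_cast this
  have hE := hausdorffMeasure_of_dimH_lt hd
  have hsub : L ⊆ ⋃ k : ℕ, {q : V × ℝ | ‖q.1‖ ≤ (k:ℝ) ∧ ∃ p ∈ E, ‖p.1‖ ≤ (k:ℝ) ∧ q.2 = ⟪p.1, q.1⟫ + p.2} := by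
    intro q hq
    obtain ⟨p, hp, h⟩ := hL q hq
    obtain ⟨k, hk⟩ := exists_nat_ge (max ‖q.1‖ ‖p.1‖)
    exact mem_iUnion.2 ⟨k, (le_max_left _ _).trans hk, p, hp, (le_max_right _ _).trans hk, h⟩
  have h0 : μH[((d + m : ℝ≥0) : ℝ)] L = 0 := by
    refine measure_mono_null hsub (measure_iUnion_null fun k => ?_)
    have := upper_null μ E d hd0 hE k (by positivity)
    push_cast
    exact this
  have := dimH_le_of_hausdorffMeasure_ne_top (d := d + m) (s := L) (by rw [h0]; simp)
  exact absurd hr2 (not_lt.2 this)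

theorem lower_dim {V : Type} [NormedAddCommGroup V] [InnerProductSpace ℝ V] [FiniteDimensional ℝ V]
    [MeasurableSpace V] [BorelSpace V] (μ : Measure V) [μ.IsAddHaarMeasure]
    (E L : Set (V × ℝ)) (hne : E.Nonempty) (hL : ∀ p ∈ E, ∀ x, (x, ⟪p.1, x⟫ + p.2) ∈ L) :
    min (dimH E + (Module.finrank ℝ V : ℝ≥0∞)) ((Module.finrank ℝ V : ℝ≥0∞) + 1) ≤ dimH L := by
  set m := Module.finrank ℝ V with hm
  have hmL : (m : ℝ≥0∞) ≤ dimH L := by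
    obtain ⟨p, hp⟩ := hne
    have h1 : Prod.fst '' L = (univ : Set V) := by
      refine eq_univ_of_forall fun x => ⟨_, hL p hp x, rfl⟩
    have h2 := (LipschitzWith.prod_fst (α := V) (β := ℝ)).dimH_image_le L
    rwa [h1, Real.dimH_univ_eq_finrank] at h2
  by_contra hcon
  push Not at hcon
  obtain ⟨r, hr1, hr2⟩ := ENNReal.lt_iff_exists_nnreal_btwn.1 hcon
  rw [lt_min_iff] at hr2
  have hmr' : (m : ℝ≥0) < r := by
    have h2 : ((m : ℝ≥0) : ℝ≥0∞) < r := by simpa using lt_of_le_of_lt hmL hr1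
    exact ENNReal.coe_lt_coe.1 h2
  obtain ⟨d, rfl⟩ : ∃ d : ℝ≥0, r = d + m := ⟨r - m, (tsub_add_cancel_of_le hmr'.le).symm⟩
  push_cast at hr2
  have hd1 : (d : ℝ≥0∞) < dimH E := lt_of_add_lt_add_right hr2.1
  have hd2 : (d : ℝ≥0∞) < 1 := by
    have := hr2.2
    rw [add_comm] at this
    exact lt_of_add_lt_add_left this
  obtain ⟨s, hs1, hs2⟩ := ENNReal.lt_iff_exists_nnreal_btwn.1 (lt_min hd1 hd2)
  rw [lt_min_iff] at hs2
  have hds : d < s := ENNReal.coe_lt_coe.1 hs1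
  have hs1' : s < 1 := by exact_mod_cast hs2.2
  have hE := hausdorffMeasure_of_lt_dimH hs2.1
  have hL0 := hausdorffMeasure_of_dimH_lt hr1
  -- localize
  obtain ⟨S, hSc, hSd⟩ := TopologicalSpace.exists_countable_dense (V × ℝ)
  obtain ⟨z, hz⟩ : ∃ z : V × ℝ, μH[(s:ℝ)] (E ∩ closedBall z (1/2)) ≠ 0 := by
    by_contra h
    push Not at h
    have h1 : E ⊆ ⋃ z ∈ S, E ∩ closedBall z (1/2) := by
      intro p hp
      obtain ⟨z, hzS, hz⟩ := hSd.exists_dist_lt p (show (0:ℝ) < 1/2 by norm_num)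
      exact mem_iUnion₂.2 ⟨z, hzS, hp, hz.le⟩
    have h2 : μH[(s:ℝ)] E = 0 :=
      measure_mono_null h1 ((measure_biUnion_null_iff hSc).2 fun z _ => h z)
    rw [hE] at h2
    exact ENNReal.top_ne_zero h2
  have hd0 : (0:ℝ) ≤ d := d.2
  have hds' : (d:ℝ) < s := by exact_mod_cast hds
  refine lower_main μ (E ∩ closedBall z (1/2)) L (fun p hp x => hL p hp.1 x) s ((d + m : ℝ≥0) : ℝ)
    (by linarith) (by exact_mod_cast hs1'.le) ?_ ?_ ?_ hz hL0
  · have : (0:ℝ≥0) < d + m := lt_of_le_of_lt zero_le hmr'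
    exact_mod_cast this
  · push_cast; linarith
  · intro p hp q hq
    have h1 : dist p z ≤ 1/2 := hp.2
    have h2 : dist q z ≤ 1/2 := hq.2
    linarith [dist_triangle_right p q z]

end HypUnion

/-- **Dimension of a union of hyperplanes.** For a non-empty Borel set `E ⊆ ℝⁿ`,
`dim_H L(E) = min {dim_H E + n − 1, n}`. -/
theorem dimH_hyperplaneUnion (n : ℕ) (hn : 2 ≤ n)
    (E : Set (EuclideanSpace ℝ (Fin (n - 1)) × ℝ)) (hE : MeasurableSet E)
    (hEne : E.Nonempty) :
    dimH (hyperplaneUnion E) = min (dimH E + ((n - 1 : ℕ) : ENNReal)) (n : ENNReal) := by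
  have hfr : Module.finrank ℝ (EuclideanSpace ℝ (Fin (n - 1))) = n - 1 := by simp
  have hn1 : (n : ENNReal) = ((n - 1 : ℕ) : ENNReal) + 1 := by
    have : n = (n - 1) + 1 := by omega
    exact_mod_cast this
  refine le_antisymm (le_min ?_ ?_) ?_
  · have := HypUnion.upper_dim (MeasureTheory.volume) E (hyperplaneUnion E) (by
      intro q hq
      obtain ⟨p, hp, h⟩ := Set.mem_iUnion₂.1 hq
      exact ⟨p, hp, h⟩)
    rwa [hfr] at this
  · refine (dimH_mono (Set.subset_univ _)).trans ?_
    rw [Real.dimH_univ_eq_finrank, Module.finrank_prod, hfr, Module.finrank_self, hn1]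
    push_cast
    exact le_rfl
  · have := HypUnion.lower_dim (MeasureTheory.volume) E (hyperplaneUnion E) hEne (by
      intro p hp x
      exact Set.mem_iUnion₂.2 ⟨p, hp, rfl⟩)
    rwa [hfr, ← hn1] at this
end

section
/- Let n ≥ 2, let E ⊂ ℝⁿ be a non-empty Borel set, and let A ⊂ ℝⁿ be a Borel set such that for every p ∈ E the intersection L(p) ∩ A has positive (n−1)-dimensional measure (i.e. 𝓗^{n−1}(L(p) ∩ A) > 0). Then dim_H (L(E) ∩ A) = dim_H L(E) = min{dim_H E + n − 1, n}. -/
open MeasureTheory RealInnerProductSpace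

namespace HypDim
open Set Filter Topology ENNReal

section content
variable {X ι : Type*} (code : ℕ → X → ι)

/-- `P` (a set of words) covers `S`. -/
def Cov (P : Set (ℕ × ι)) (S : Set X) : Prop := ∀ x ∈ S, ∃ k, (k, code k x) ∈ P

/-- total cost of a set of words -/
noncomputable def cost (ρ : ℝ≥0∞) (P : Set (ℕ × ι)) : ℝ≥0∞ :=
  ∑' w : ℕ × ι, P.indicator (fun w => ρ ^ w.1) w

/-- words of `P` without proper ancestors in `P` -/
def top (P : Set (ℕ × ι)) : Set (ℕ × ι) :=
  {w | w ∈ P ∧ ¬ ∃ v ∈ P, v.1 < w.1 ∧ ∃ x, code w.1 x = w.2 ∧ code v.1 x = v.2}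

/-- net content -/
noncomputable def cont (ρ : ℝ≥0∞) (S : Set X) : ℝ≥0∞ :=
  ⨅ (P : Set (ℕ × ι)) (_ : Cov code P S), cost ρ P

/-- nestedness -/
def Nested : Prop := ∀ j k x y, j ≤ k → code k x = code k y → code j x = code j y

variable {code}

lemma cost_mono {ρ : ℝ≥0∞} {P Q : Set (ℕ × ι)} (h : P ⊆ Q) : cost ρ P ≤ cost ρ Q :=
  ENNReal.tsum_le_tsum fun _ => indicator_le_indicator_of_subset h (fun _ => zero_le) _

lemma cost_iUnion_le {β : Type*} {ρ : ℝ≥0∞} (P : β → Set (ℕ × ι)) :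
    cost ρ (⋃ b, P b) ≤ ∑' b, cost ρ (P b) := by
  unfold cost
  rw [ENNReal.tsum_comm]
  refine ENNReal.tsum_le_tsum fun w => ?_
  by_cases h : w ∈ ⋃ b, P b
  · obtain ⟨b, hb⟩ := mem_iUnion.1 h
    rw [indicator_of_mem h]
    calc ρ ^ w.1 = (P b).indicator (fun w : ℕ × ι => ρ ^ w.1) w := by rw [indicator_of_mem hb]
      _ ≤ _ := ENNReal.le_tsum b
  · rw [indicator_of_notMem h]; exact zero_le

lemma cost_finset {ρ : ℝ≥0∞} (F : Finset ι) (k : ℕ) :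
    cost ρ {w : ℕ × ι | w.1 = k ∧ w.2 ∈ F} ≤ F.card * ρ ^ k := by
  classical
  unfold cost
  have : {w : ℕ × ι | w.1 = k ∧ w.2 ∈ F} = ↑(({k} : Finset ℕ) ×ˢ F) := by
    ext ⟨a, b⟩; simp; tauto
  rw [this, ← sum_eq_tsum_indicator, Finset.sum_product]
  simp

lemma cont_le {ρ : ℝ≥0∞} {P : Set (ℕ × ι)} {S : Set X} (h : Cov code P S) :
    cont code ρ S ≤ cost ρ P := iInf₂_le P h

lemma exists_cov {ρ : ℝ≥0∞} {S : Set X} {a : ℝ≥0∞} (h : cont code ρ S < a) :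
    ∃ P, Cov code P S ∧ cost ρ P < a := by
  unfold cont at h
  simp only [iInf_lt_iff] at h
  obtain ⟨P, h, h'⟩ := h
  exact ⟨P, h, h'⟩

lemma cont_mono {ρ : ℝ≥0∞} {S T : Set X} (h : S ⊆ T) : cont code ρ S ≤ cont code ρ T :=
  le_iInf₂ fun _ hP => cont_le fun x hx => hP x (h hx)

lemma cont_empty {ρ : ℝ≥0∞} : cont code ρ (∅ : Set X) = 0 := by
  have : Cov code (∅ : Set (ℕ × ι)) (∅ : Set X) := fun x hx => absurd hx (by simp)
  simpa [cost] using cont_le (ρ := ρ) this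

lemma cont_iUnion_le {ρ : ℝ≥0∞} (S : ℕ → Set X) :
    cont code ρ (⋃ i, S i) ≤ ∑' i, cont code ρ (S i) := by
  by_cases htop : ∑' i, cont code ρ (S i) = ⊤
  · rw [htop]; exact le_top
  refine ENNReal.le_of_forall_pos_le_add fun ε hε _ => ?_
  obtain ⟨e, he, hes⟩ := ENNReal.exists_pos_sum_of_countable' (ε := (ε : ℝ≥0∞)) (by simpa using hε.ne') ℕ
  have : ∀ i, ∃ P, Cov code P (S i) ∧ cost ρ P < cont code ρ (S i) + e i := fun i =>
    exists_cov (ENNReal.lt_add_right (ENNReal.ne_top_of_tsum_ne_top htop i) (he i).ne')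
  choose P hP hPc using this
  calc cont code ρ (⋃ i, S i) ≤ cost ρ (⋃ i, P i) := cont_le (by
        intro x hx
        obtain ⟨i, hi⟩ := mem_iUnion.1 hx
        obtain ⟨k, hk⟩ := hP i x hi
        exact ⟨k, mem_iUnion.2 ⟨i, hk⟩⟩)
    _ ≤ ∑' i, cost ρ (P i) := cost_iUnion_le _
    _ ≤ ∑' i, (cont code ρ (S i) + e i) := ENNReal.tsum_le_tsum fun i => (hPc i).le
    _ = ∑' i, cont code ρ (S i) + ∑' i, e i := ENNReal.tsum_add
    _ ≤ _ := by gcongr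

/-- The net content as an outer measure. -/
noncomputable def contOM (code : ℕ → X → ι) (ρ : ℝ≥0∞) : OuterMeasure X where
  measureOf := cont code ρ
  empty := cont_empty
  mono := cont_mono
  iUnion_nat S _ := cont_iUnion_le S

lemma cov_top (hn : Nested code) {P : Set (ℕ × ι)} {S : Set X} (h : Cov code P S) :
    Cov code (top code P) S := by
  classical
  intro x hx
  have hex := h x hx
  refine ⟨Nat.find hex, Nat.find_spec hex, ?_⟩
  rintro ⟨⟨j, c⟩, hv, hlt, y, hy, hy'⟩
  simp only at hlt hy hy'
  have := hn j _ y x hlt.le hy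
  refine Nat.find_min hex hlt ?_
  rw [← this, hy']; exact hv

lemma top_step {ρ : ℝ≥0∞} {U P : Set (ℕ × ι)} {S : Set X} (hU : Cov code (top code U) S)
    (hP : Cov code P S) :
    cost ρ (top code (U ∪ P)) + cont code ρ S ≤ cost ρ (top code U) + cost ρ P := by
  classical
  set R : Set (ℕ × ι) := ((top code U ∪ P) \ top code (U ∪ P)) ∪ (top code U ∩ P) with hR
  have hRc : Cov code R S := by
    intro x hx
    obtain ⟨i, hi⟩ := hU x hx
    obtain ⟨j, hj⟩ := hP x hx
    rcases lt_trichotomy i j with h | h | h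
    · refine ⟨j, Or.inl ⟨Or.inr hj, fun hh => hh.2 ⟨_, Or.inl hi.1, h, x, rfl, rfl⟩⟩⟩
    · subst h; exact ⟨i, Or.inr ⟨hi, hj⟩⟩
    · refine ⟨i, Or.inl ⟨Or.inl hi, fun hh => hh.2 ⟨_, Or.inr hj, h, x, rfl, rfl⟩⟩⟩
  have hsub : top code (U ∪ P) ⊆ top code U ∪ P := by
    rintro w ⟨hw, hw'⟩
    rcases hw with h | h
    · exact Or.inl ⟨h, fun ⟨v, hv, hh⟩ => hw' ⟨v, Or.inl hv, hh⟩⟩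
    · exact Or.inr h
  calc _ ≤ cost ρ (top code (U ∪ P)) + cost ρ R := by gcongr; exact cont_le hRc
    _ ≤ _ := by
      unfold cost
      rw [← ENNReal.tsum_add, ← ENNReal.tsum_add]
      refine ENNReal.tsum_le_tsum fun w => ?_
      have := @hsub w
      simp only [indicator, hR, mem_union, Set.mem_sdiff, mem_inter_iff] at this ⊢
      by_cases h1 : w ∈ top code U <;> by_cases h2 : w ∈ P <;>
        by_cases h3 : w ∈ top code (U ∪ P) <;> simp_all

/-- Increasing sets lemma. -/
lemma cont_iUnion_mono (hn : Nested code) {ρ : ℝ≥0∞} (S : ℕ → Set X) (hS : Monotone S) :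
    cont code ρ (⋃ i, S i) ≤ ⨆ i, cont code ρ (S i) := by
  by_cases htop : ⨆ i, cont code ρ (S i) = ⊤
  · rw [htop]; exact le_top
  have hfin : ∀ i, cont code ρ (S i) ≠ ⊤ := fun i => ne_top_of_le_ne_top htop (le_iSup (fun i => cont code ρ (S i)) i)
  refine ENNReal.le_of_forall_pos_le_add fun ε hε _ => ?_
  obtain ⟨e, he, hes⟩ := ENNReal.exists_pos_sum_of_countable' (ε := (ε : ℝ≥0∞)) (by simpa using hε.ne') ℕ
  have : ∀ i, ∃ P, Cov code P (S i) ∧ cost ρ P < cont code ρ (S i) + e i := fun i =>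
    exists_cov (ENNReal.lt_add_right (hfin i) (he i).ne')
  choose P hP hPc using this
  set U : ℕ → Set (ℕ × ι) := fun k => ⋃ j ≤ k, P j with hU
  have hUs : ∀ k, U (k+1) = U k ∪ P (k+1) := by
    intro k; ext w; simp only [hU, mem_iUnion, mem_union, exists_prop]
    constructor
    · rintro ⟨j, hj, h⟩
      rcases Nat.le_succ_iff.1 hj with h' | h'
      · exact Or.inl ⟨j, h', h⟩
      · exact Or.inr (by subst h'; exact h)
    · rintro (⟨j, hj, h⟩ | h)
      · exact ⟨j, hj.trans (Nat.le_succ _), h⟩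
      · exact ⟨k+1, le_rfl, h⟩
  have hUcov : ∀ k, Cov code (U k) (S k) := fun k x hx => by
    obtain ⟨j, hj⟩ := hP k x hx
    exact ⟨j, mem_iUnion₂.2 ⟨k, le_rfl, hj⟩⟩
  have key : ∀ k, cost ρ (top code (U k)) ≤ cont code ρ (S k) + ∑ j ∈ Finset.range (k+1), e j := by
    intro k
    induction k with
    | zero =>
      have : U 0 = P 0 := by simp [hU]
      rw [this]
      calc _ ≤ cost ρ (P 0) := cost_mono fun w hw => hw.1
        _ ≤ _ := by simpa using (hPc 0).le
    | succ k ih =>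
      have h1 := top_step (ρ := ρ) (U := U k) (P := P (k+1)) (S := S k) (cov_top hn (hUcov k))
        (fun x hx => hP (k+1) x (hS (Nat.le_succ k) hx))
      rw [← hUs] at h1
      rw [← ENNReal.add_le_add_iff_right (hfin k)]
      calc _ ≤ _ := h1
        _ ≤ (cont code ρ (S k) + ∑ j ∈ Finset.range (k+1), e j) + (cont code ρ (S (k+1)) + e (k+1)) := by
          gcongr; exact (hPc _).le
        _ = _ := by rw [Finset.sum_range_succ _ (k+1)]; ring
  have hfinal : cost ρ (top code (⋃ k, P k)) ≤ (⨆ i, cont code ρ (S i)) + ε := by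
    classical
    unfold cost
    rw [ENNReal.tsum_eq_iSup_sum]
    refine iSup_le fun F => ?_
    have : ∃ k, ∀ w ∈ F, w ∈ top code (⋃ k, P k) → w ∈ top code (U k) := by
      have : ∀ w : ℕ × ι, ∃ k, ∀ k' ≥ k, w ∈ top code (⋃ k, P k) → w ∈ top code (U k') := by
        intro w
        by_cases hw : w ∈ top code (⋃ k, P k)
        · obtain ⟨j, hj⟩ := mem_iUnion.1 hw.1
          refine ⟨j, fun k' hk' _ => ⟨mem_iUnion₂.2 ⟨j, hk', hj⟩, ?_⟩⟩
          rintro ⟨v, hv, h⟩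
          obtain ⟨i, _, hi⟩ := mem_iUnion₂.1 hv
          exact hw.2 ⟨v, mem_iUnion.2 ⟨i, hi⟩, h⟩
        · exact ⟨0, fun _ _ h => absurd h hw⟩
      choose K hK using this
      exact ⟨F.sup K, fun w hw h => hK w _ (Finset.le_sup hw) h⟩
    obtain ⟨k, hk⟩ := this
    calc ∑ w ∈ F, (top code (⋃ k, P k)).indicator (fun w => ρ ^ w.1) w
        ≤ ∑ w ∈ F, (top code (U k)).indicator (fun w => ρ ^ w.1) w := by
          refine Finset.sum_le_sum fun w hw => ?_
          by_cases h : w ∈ top code (⋃ k, P k)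
          · rw [indicator_of_mem h, indicator_of_mem (hk w hw h)]
          · rw [indicator_of_notMem h]; exact zero_le
      _ ≤ cost ρ (top code (U k)) := ENNReal.sum_le_tsum _
      _ ≤ _ := key k
      _ ≤ _ := by
          gcongr
          · exact le_iSup (fun i => cont code ρ (S i)) k
          · exact (ENNReal.sum_le_tsum _).trans hes.le
  refine (cont_le (cov_top hn ?_)).trans hfinal
  intro x hx
  obtain ⟨i, hi⟩ := mem_iUnion.1 hx
  obtain ⟨k, hk⟩ := hP i x hi
  exact ⟨k, mem_iUnion.2 ⟨i, hk⟩⟩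

end content
end HypDim


namespace HypDim
open Set Filter Topology ENNReal

section frost
variable {X ι : Type*}

set_option linter.unusedSectionVars false
variable [MetricSpace X]

/-- Axioms for a dyadic net. -/
structure Net (code : ℕ → X → ι) : Prop where
  nested : Nested code
  diam : ∃ D : ℝ, 0 ≤ D ∧ ∀ k x y, code k x = code k y → dist x y ≤ D * (1/2) ^ k
  nbr : ∀ r : ℝ, ∃ C : ℕ, ∀ k (x : X), ∃ F : Finset ι, F.card ≤ C ∧
    ∀ y z, code k y = code k x → dist y z ≤ r * (1/2) ^ k → code k z ∈ F

variable {code : ℕ → X → ι}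

lemma cont_cell_le {ρ : ℝ≥0∞} {S : Set X} {k : ℕ} (F : Finset ι) (h : ∀ x ∈ S, code k x ∈ F) :
    cont code ρ S ≤ F.card * ρ ^ k :=
  (cont_le (P := {w : ℕ × ι | w.1 = k ∧ w.2 ∈ F}) fun x hx => ⟨k, rfl, h x hx⟩).trans
    (cost_finset F k)

lemma massDist [MeasurableSpace X] [BorelSpace X] (hN : Net code) {ρ : ℝ≥0∞} (hρ : ρ ≠ ⊤) (d : ℕ) :
    ∀ (j : ℕ) (c : ι) (S : Set X), (∀ x ∈ S, code j x = c) →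
    ∃ μ : Measure X, μ Sᶜ = 0 ∧ μ univ = cont code ρ S ∧
      ∀ i, j ≤ i → i ≤ j + d → ∀ c', μ {x | code i x = c'} ≤ ρ ^ i := by
  classical
  have hle : ∀ (j : ℕ) (c : ι) (S : Set X), (∀ x ∈ S, code j x = c) → cont code ρ S ≤ ρ ^ j := by
    intro j c S h
    simpa using cont_cell_le (ρ := ρ) {c} (fun x hx => by simpa using h x hx)
  induction d with
  | zero =>
    intro j c S h
    rcases S.eq_empty_or_nonempty with rfl | ⟨x, hx⟩
    · exact ⟨0, by simp, by simp [cont_empty], by simp⟩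
    · refine ⟨cont code ρ S • Measure.dirac x, by simp [hx], by simp, ?_⟩
      intro i h1 h2 c'
      obtain rfl : i = j := by omega
      refine (measure_mono (subset_univ _)).trans ?_
      simpa using hle i c S h
  | succ d ih =>
    intro j c S h
    rcases S.eq_empty_or_nonempty with rfl | ⟨x, hx⟩
    · exact ⟨0, by simp, by simp [cont_empty], by simp⟩
    obtain ⟨D, hD, hdiam⟩ := hN.diam
    obtain ⟨C, hC⟩ := hN.nbr (2 * D)
    obtain ⟨F, -, hF⟩ := hC (j+1) x
    have hF' : ∀ y ∈ S, code (j+1) y ∈ F := fun y hy => hF x y rfl (by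
      have := hdiam j x y ((h x hx).trans (h y hy).symm)
      rw [pow_succ]; linarith)
    have := fun c' => ih (j+1) c' (S ∩ {x | code (j+1) x = c'}) (fun x hx => hx.2)
    choose m hm1 hm2 hm3 using this
    set T := ∑ c' ∈ F, cont code ρ (S ∩ {x | code (j+1) x = c'}) with hT
    have hTle : cont code ρ S ≤ T := by
      have : S ⊆ ⋃ c' ∈ F, (S ∩ {x | code (j+1) x = c'}) := fun y hy =>
        mem_iUnion₂.2 ⟨_, hF' y hy, hy, rfl⟩
      calc cont code ρ S = contOM code ρ S := rfl
        _ ≤ contOM code ρ (⋃ c' ∈ F, (S ∩ {x | code (j+1) x = c'})) := measure_mono this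
        _ ≤ _ := measure_biUnion_finset_le _ _
    have hTtop : T ≠ ⊤ := by
      refine ENNReal.sum_ne_top.2 fun c' _ => ne_top_of_le_ne_top (ENNReal.pow_ne_top (n := j+1) hρ) ?_
      exact hle _ c' _ (fun x hx => hx.2)
    set θ := cont code ρ S / T with hθ
    have hθ1 : θ ≤ 1 := ENNReal.div_le_of_le_mul (by simpa using hTle)
    have hθT : θ * T = cont code ρ S := by
      by_cases h0 : T = 0
      · have : cont code ρ S = 0 := by simpa [h0] using hTle
        simp [h0, this]
      · exact ENNReal.div_mul_cancel h0 hTtop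
    have huniv : (θ • ∑ c' ∈ F, m c') univ = cont code ρ S := by
      rw [← hθT]
      simp [Measure.finsetSum_apply, hm2, hT]
    refine ⟨θ • ∑ c' ∈ F, m c', ?_, huniv, ?_⟩
    · simp only [Measure.smul_apply, Measure.finsetSum_apply, smul_eq_mul, mul_eq_zero]
      right
      refine Finset.sum_eq_zero fun c' _ => measure_mono_null ?_ (hm1 c')
      exact compl_subset_compl.2 inter_subset_left
    · intro i h1 h2 c'
      rcases h1.eq_or_lt with rfl | h1
      · refine (measure_mono (subset_univ _)).trans ?_
        rw [huniv]; exact hle _ c S h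
      · calc (θ • ∑ c' ∈ F, m c') {x | code i x = c'}
            ≤ 1 * ∑ c'' ∈ F, m c'' {x | code i x = c'} := by
              simp only [Measure.smul_apply, Measure.finsetSum_apply, smul_eq_mul]
              gcongr
          _ = ∑ c'' ∈ F, m c'' {x | code i x = c'} := one_mul _
          _ ≤ ρ ^ i := by
            by_cases hex : ∃ y ∈ S, code i y = c'
            · obtain ⟨y, hy, hyc⟩ := hex
              rw [Finset.sum_eq_single_of_mem (code (j+1) y) (hF' y hy)]
              · exact hm3 _ i h1 (by omega) c'
              · intro b _ hb
                refine measure_mono_null ?_ (hm1 b)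
                rintro z hz ⟨hz1, hz2⟩
                exact hb (hz2.symm.trans (hN.nested (j+1) i z y h1 (hz.trans hyc.symm)))
            · rw [Finset.sum_eq_zero]
              · exact zero_le
              · intro b _
                refine measure_mono_null ?_ (hm1 b)
                rintro z hz ⟨hz1, hz2⟩
                exact hex ⟨z, hz1, hz⟩

/-- compact sets of almost full content -/
lemma exists_compact (hN : Net code) {ρ : ℝ≥0∞} (f : (ℕ → ℕ) → X) (hf : Continuous f)
    (h : cont code ρ (range f) ≠ 0) :
    ∃ K, IsCompact K ∧ K ⊆ range f ∧ cont code ρ K ≠ 0 := by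
  classical
  obtain ⟨c, hc0, hc⟩ := exists_between (pos_iff_ne_zero.2 h)
  have step : ∀ (k : ℕ) (B : Set (ℕ → ℕ)), c < cont code ρ (f '' B) →
      ∃ n, c < cont code ρ (f '' (B ∩ {x | x k ≤ n})) := by
    intro k B hB
    have hu : f '' B = ⋃ n : ℕ, f '' (B ∩ {x | x k ≤ n}) := by
      rw [← image_iUnion, ← inter_iUnion]
      congr 1
      refine (inter_eq_left.2 fun x _ => mem_iUnion.2 ⟨x k, le_refl (x k)⟩).symm
    rw [hu] at hB
    have := hB.trans_le (cont_iUnion_mono hN.nested _ (fun a b hab => image_mono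
      (inter_subset_inter_right _ fun x (hx : x k ≤ a) => hx.trans hab)))
    exact lt_iSup_iff.1 this
  choose! nn hnn using step
  let B : ℕ → Set (ℕ → ℕ) := fun k => Nat.rec univ (fun k B => B ∩ {x | x k ≤ nn k B}) k
  have hB : ∀ k, c < cont code ρ (f '' B k) := by
    intro k
    induction k with
    | zero => simpa [B] using hc
    | succ k ih => exact hnn k _ ih
  set N : ℕ → ℕ := fun k => nn k (B k) with hNdef
  have hBN : ∀ k x, x ∈ B k ↔ ∀ i < k, x i ≤ N i := by
    intro k
    induction k with
    | zero => intro x; simp [B]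
    | succ k ih =>
      intro x
      have : x ∈ B (k+1) ↔ x ∈ B k ∧ x k ≤ N k := Iff.rfl
      rw [this, ih, Nat.forall_lt_succ_right]
  set K' : Set (ℕ → ℕ) := Set.pi univ fun i => Iic (N i) with hK'
  have hK'c : IsCompact K' := isCompact_univ_pi fun i => (finite_Iic _).isCompact
  refine ⟨f '' K', hK'c.image hf, image_subset_range _ _, ?_⟩
  intro h0
  obtain ⟨C, hC⟩ := hN.nbr 1
  have hd : (0 : ℝ≥0∞) < c / (C + 1) := ENNReal.div_pos hc0.ne' (by finiteness)
  obtain ⟨P, hP, hPc⟩ := exists_cov (h0 ▸ hd)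
  let cell : ℕ × ι → Set X := fun w => {x | code w.1 x = w.2}
  set U : Set X := ⋃ w ∈ P, Metric.thickening ((1/2 : ℝ) ^ w.1) (cell w) with hU
  have hUo : IsOpen U := isOpen_biUnion fun w _ => Metric.isOpen_thickening
  have hKU : K' ⊆ f ⁻¹' U := by
    intro x hx
    obtain ⟨k, hk⟩ := hP (f x) (mem_image_of_mem _ hx)
    exact mem_iUnion₂.2 ⟨_, hk, Metric.self_subset_thickening (by positivity) _ rfl⟩
  obtain ⟨k, hk⟩ : ∃ k, B k ⊆ f ⁻¹' U := by
    by_contra hcon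
    push Not at hcon
    have : ∀ k, ∃ x ∈ B k, x ∉ f ⁻¹' U := fun k => not_subset.1 (hcon k)
    choose x hxB hxU using this
    let y : ℕ → ℕ → ℕ := fun k i => min (x k i) (N i)
    obtain ⟨z, hz, φ, hφ, hlim⟩ := hK'c.tendsto_subseq (x := y) (fun k i _ =>
      show min (x k i) (N i) ≤ N i from min_le_right _ _)
    have hlim2 : Tendsto (x ∘ φ) atTop (𝓝 z) := by
      rw [tendsto_pi_nhds] at hlim ⊢
      intro i
      refine (hlim i).congr' ?_
      filter_upwards [eventually_gt_atTop i] with k hk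
      exact min_eq_left ((hBN _ _).1 (hxB (φ k)) i (hk.trans_le hφ.le_apply))
    have hcl : IsClosed (f ⁻¹' U)ᶜ := (hUo.preimage hf).isClosed_compl
    exact hcl.mem_of_tendsto hlim2 (Eventually.of_forall fun k => hxU (φ k)) (hKU hz)
  have hUle : cont code ρ U ≤ (C + 1) * cost ρ P := by
    calc cont code ρ U ≤ contOM code ρ (⋃ w : ℕ × ι, if w ∈ P then Metric.thickening ((1/2 : ℝ) ^ w.1) (cell w) else ∅) := by
          refine cont_mono ?_
          intro x hx
          obtain ⟨w, hw, hx⟩ := mem_iUnion₂.1 hx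
          exact mem_iUnion.2 ⟨w, by simpa [hw] using hx⟩
      _ ≤ cost ρ (⋃ w : ℕ × ι, if h : w ∈ P ∧ (cell w).Nonempty then
            {v : ℕ × ι | v.1 = w.1 ∧ v.2 ∈ (hC w.1 h.2.some).choose} else ∅) := by
          refine cont_le ?_
          intro x hx
          obtain ⟨w, hx⟩ := mem_iUnion.1 hx
          by_cases hw : w ∈ P
          · simp only [hw, if_true] at hx
            obtain ⟨y, hy, hxy⟩ := Metric.mem_thickening_iff.1 hx
            have hne : w ∈ P ∧ (cell w).Nonempty := ⟨hw, y, hy⟩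
            refine ⟨w.1, mem_iUnion.2 ⟨w, ?_⟩⟩
            rw [dif_pos hne]
            refine ⟨rfl, (hC w.1 hne.2.some).choose_spec.2 y x ?_ ?_⟩
            · have h1 : code w.1 hne.2.some = w.2 := hne.2.some_mem
              have h2 : code w.1 y = w.2 := hy
              rw [h1, h2]
            · rw [dist_comm, one_mul]; exact hxy.le
          · simp [hw] at hx
      _ ≤ _ := cost_iUnion_le _
      _ ≤ ∑' w : ℕ × ι, (C + 1) * P.indicator (fun w => ρ ^ w.1) w := by
          refine ENNReal.tsum_le_tsum fun w => ?_
          split_ifs with hw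
          · rw [indicator_of_mem hw.1]
            refine (cost_finset _ _).trans ?_
            gcongr
            exact (Nat.cast_le.2 (hC w.1 hw.2.some).choose_spec.1).trans le_self_add
          · simp [cost]
      _ = _ := ENNReal.tsum_mul_left
  have : c < c := calc
    c < cont code ρ (f '' B k) := hB k
    _ ≤ cont code ρ U := cont_mono (image_subset_iff.2 hk)
    _ ≤ (C + 1) * cost ρ P := hUle
    _ ≤ (C + 1) * (c / (C + 1)) := by gcongr
    _ ≤ c := ENNReal.mul_div_le
  exact lt_irrefl _ this

/-- Frostman's lemma for nets. -/
lemma frostman_net [MeasurableSpace X] [BorelSpace X] [PolishSpace X] (hN : Net code) {ρ : ℝ≥0∞}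
    (hρ : ρ ≠ ⊤) (E : Set X) (hE : MeasurableSet E) (c : ι) (hEc : ∀ x ∈ E, code 0 x = c)
    (h0 : cont code ρ E ≠ 0) :
    ∃ μ : Measure X, IsProbabilityMeasure μ ∧ μ Eᶜ = 0 ∧ ∃ C : ℝ≥0∞, C ≠ ⊤ ∧
      ∀ x k, μ (Metric.ball x ((1/2) ^ k)) ≤ C * ρ ^ k := by
  classical
  obtain ⟨K, hK, hKE, hK0⟩ : ∃ K, IsCompact K ∧ K ⊆ E ∧ cont code ρ K ≠ 0 := by
    have := hE.analyticSet
    rw [AnalyticSet] at this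
    rcases this with rfl | ⟨f, hf, rfl⟩
    · exact absurd cont_empty h0
    · exact exists_compact hN f hf h0
  set a := cont code ρ K with ha
  have hatop : a ≠ ⊤ := by
    have : a ≤ 1 := by
      simpa using cont_cell_le (ρ := ρ) (code := code) (k := 0) {c} (fun x hx => by simpa using hEc x (hKE hx))
    exact ne_top_of_le_ne_top one_ne_top this
  have hm := fun d => massDist hN hρ d 0 c K (fun x hx => hEc x (hKE hx))
  choose m hm1 hm2 hm3 using hm
  let ν : ℕ → ProbabilityMeasure X := fun d => ⟨a⁻¹ • m d, ⟨by
    simp [hm2, ← ha, ENNReal.inv_mul_cancel hK0 hatop]⟩⟩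
  have hcomp := isCompact_setOfPred_probabilityMeasure_mass_eq_compl_isCompact_le (E := X)
    (u := fun _ => 0) (K := fun _ => K) tendsto_const_nhds (fun _ => hK) (Or.inr monotone_const)
  have hνm : ∀ d, ν d ∈ {μ : ProbabilityMeasure X | ∀ _ : ℕ, μ Kᶜ ≤ 0} := by
    intro d _
    have : ((ν d : Measure X)) Kᶜ = 0 := by simp [ν, hm1]
    simp [ProbabilityMeasure.coeFn_def, this]
  obtain ⟨μ, hμ, hlim⟩ := hcomp.ultrafilter_le_nhds ((hyperfilter ℕ).map ν) (by
    rw [le_principal_iff]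
    exact Filter.univ_mem' (f := (hyperfilter ℕ : Filter ℕ)) hνm)
  have hlim' : Tendsto ν (hyperfilter ℕ) (𝓝 μ) := hlim
  obtain ⟨C, hC⟩ := hN.nbr 1
  refine ⟨μ, inferInstance, ?_, a⁻¹ * C, ENNReal.mul_ne_top (ENNReal.inv_ne_top.2 hK0) (by finiteness), ?_⟩
  · refine measure_mono_null (compl_subset_compl.2 hKE) ?_
    have := hμ 0
    rw [← ProbabilityMeasure.ennreal_coeFn_eq_coeFn_toMeasure]
    simpa using this
  · intro x k
    have h1 := ProbabilityMeasure.le_liminf_measure_open_of_tendsto hlim'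
      (Metric.isOpen_ball (x := x) (ε := (1/2) ^ k))
    refine h1.trans ?_
    refine Filter.liminf_le_of_frequently_le' (Eventually.frequently ?_)
    have hev : ∀ᶠ d in (hyperfilter ℕ : Filter ℕ), k ≤ d :=
      Nat.hyperfilter_le_atTop (eventually_ge_atTop k)
    filter_upwards [hev] with d hd
    obtain ⟨F, hFc, hF⟩ := hC k x
    have hs : Metric.ball x ((1/2 : ℝ) ^ k) ⊆ ⋃ c' ∈ F, {y | code k y = c'} := fun y hy =>
      mem_iUnion₂.2 ⟨_, hF x y rfl (by rw [one_mul, dist_comm]; exact (Metric.mem_ball.1 hy).le), rfl⟩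
    calc (ν d : Measure X) (Metric.ball x ((1/2) ^ k)) = a⁻¹ * m d (Metric.ball x ((1/2) ^ k)) := by
          simp [ν]
      _ ≤ a⁻¹ * ∑ c' ∈ F, m d {y | code k y = c'} := by
          gcongr
          exact (measure_mono hs).trans (measure_biUnion_finset_le _ _)
      _ ≤ a⁻¹ * ∑ c' ∈ F, ρ ^ k := by
          gcongr with c' _
          exact hm3 d k (Nat.zero_le _) (by omega) c'
      _ ≤ a⁻¹ * C * ρ ^ k := by
          rw [Finset.sum_const, nsmul_eq_mul, mul_assoc]
          gcongr
end frost
end HypDim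


namespace HypDim
open Set Filter Topology ENNReal

/-- dyadic codes from coordinates -/
noncomputable def dcode {X J : Type*} (φ : X → J → ℝ) (k : ℕ) (x : X) : J → ℤ :=
  fun j => ⌊(2 : ℝ) ^ k * φ x j⌋

lemma floor_near {u v t : ℝ} (h : |u - v| ≤ t) : ⌊v⌋ ∈ Finset.Icc (⌊u⌋ - (⌈t⌉₊ + 1)) (⌊u⌋ + (⌈t⌉₊ + 1)) := by
  rw [abs_le] at h
  have ht := Nat.le_ceil t
  rw [Finset.mem_Icc]
  have h1 := Int.floor_le u
  have h2 := Int.lt_floor_add_one u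
  have h3 := Int.floor_le v
  have h4 := Int.lt_floor_add_one v
  constructor
  · have : ((⌊u⌋ - (⌈t⌉₊ + 1) : ℤ) : ℝ) < ⌊v⌋ + 1 := by push_cast; linarith
    have := Int.lt_add_one_iff.1 (by exact_mod_cast this : (⌊u⌋ - (⌈t⌉₊ + 1) : ℤ) < ⌊v⌋ + 1)
    exact this
  · have : (⌊v⌋ : ℝ) < ((⌊u⌋ + (⌈t⌉₊ + 1) : ℤ) : ℝ) := by push_cast; linarith
    exact (by exact_mod_cast this : ⌊v⌋ < (⌊u⌋ + (⌈t⌉₊ + 1) : ℤ)).le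

lemma net_dcode {X J : Type*} [MetricSpace X] [Fintype J] (φ : X → J → ℝ)
    (h1 : ∀ x y j, |φ x j - φ y j| ≤ dist x y) (D : ℝ) (hD : 0 ≤ D)
    (h2 : ∀ x y r, 0 ≤ r → (∀ j, |φ x j - φ y j| ≤ r) → dist x y ≤ D * r) : Net (dcode φ) where
  nested := by
    intro j k x y hjk h
    funext i
    have h' := congrFun h i
    simp only [dcode] at h' ⊢
    have key : ∀ a : ℝ, ⌊(2 : ℝ) ^ j * a⌋ = ⌊(2 : ℝ) ^ k * a⌋ / ((2 ^ (k - j) : ℕ) : ℤ) := by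
      intro a
      rw [← Int.natCast_mul_floor_div_cancel (n := 2 ^ (k - j)) (by positivity)]
      congr 2
      push_cast
      rw [← mul_assoc, ← pow_add, Nat.sub_add_cancel hjk]
    rw [key, key, h']
  diam := by
    refine ⟨D, hD, fun k x y h => h2 x y _ (by positivity) fun j => ?_⟩
    have := Int.abs_sub_lt_one_of_floor_eq_floor (congrFun h j)
    rw [← mul_sub, abs_mul, abs_of_pos (by positivity : (0:ℝ) < 2 ^ k)] at this
    rw [one_div, inv_pow, ← one_div, le_div_iff₀ (by positivity)]
    linarith
  nbr := by
    classical
    intro r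
    refine ⟨(2 * (⌈r⌉₊ + 1) + 1) ^ Fintype.card J, fun k x => ⟨Fintype.piFinset fun j =>
      Finset.Icc (dcode φ k x j - (⌈r⌉₊ + 1)) (dcode φ k x j + (⌈r⌉₊ + 1)), ?_, ?_⟩⟩
    · rw [Fintype.card_piFinset]
      have : ∀ j, (Finset.Icc (dcode φ k x j - (⌈r⌉₊ + 1)) (dcode φ k x j + (⌈r⌉₊ + 1))).card
          = (2 * (⌈r⌉₊ + 1) + 1) := by
        intro j; rw [Int.card_Icc]; omega
      simp [this]
    · intro y z hyx hyz
      rw [Fintype.mem_piFinset]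
      intro j
      rw [← congrFun hyx j]
      apply floor_near
      rw [← mul_sub, abs_mul, abs_of_pos (by positivity : (0:ℝ) < 2 ^ k)]
      have := (h1 y z j).trans hyz
      rw [one_div, inv_pow, ← div_eq_mul_inv, le_div_iff₀ (by positivity)] at this
      linarith

lemma euclid_norm_le {m : ℕ} (x : EuclideanSpace ℝ (Fin m)) {r : ℝ} (hr : 0 ≤ r)
    (h : ∀ i, |x i| ≤ r) : ‖x‖ ≤ (m + 1) * r := by
  rw [EuclideanSpace.norm_eq]
  apply Real.sqrt_le_iff.2
  refine ⟨by positivity, ?_⟩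
  calc ∑ i, ‖x i‖ ^ 2 ≤ ∑ i : Fin m, r ^ 2 := by
        refine Finset.sum_le_sum fun i _ => ?_
        rw [Real.norm_eq_abs]
        gcongr; exact h i
    _ = m * r ^ 2 := by simp
    _ ≤ _ := by
      have : (0:ℝ) ≤ m := by positivity
      nlinarith [sq_nonneg r, mul_nonneg this (sq_nonneg r), mul_nonneg (mul_nonneg this this) (sq_nonneg r)]

/-- coordinates on `ℝ^m × ℝ` -/
def coordX {m : ℕ} (p : EuclideanSpace ℝ (Fin m) × ℝ) : Fin m ⊕ Unit → ℝ :=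
  Sum.elim (fun i => p.1 i) (fun _ => p.2)

lemma net_X (m : ℕ) : Net (dcode (coordX (m := m))) := by
  refine net_dcode _ ?_ (m + 1) (by positivity) ?_
  · rintro x y (j | j)
    · simp only [coordX, Sum.elim_inl]
      rw [Prod.dist_eq]
      refine le_trans ?_ (le_max_left _ _)
      rw [dist_eq_norm]
      exact PiLp.norm_apply_le (x.1 - y.1) j
    · simp only [coordX, Sum.elim_inr]
      rw [Prod.dist_eq]
      exact le_max_right _ _
  · intro x y r hr h
    rw [Prod.dist_eq]
    refine max_le ?_ ?_
    · rw [dist_eq_norm]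
      exact euclid_norm_le _ hr fun i => by simpa [coordX] using h (Sum.inl i)
    · rw [Real.dist_eq]
      refine (by simpa [coordX] using h (Sum.inr ()) : |x.2 - y.2| ≤ r).trans ?_
      nlinarith [mul_nonneg (Nat.cast_nonneg (α := ℝ) m) hr]

lemma net_V (m : ℕ) : Net (dcode (fun (x : EuclideanSpace ℝ (Fin m)) i => x i)) := by
  refine net_dcode _ ?_ (m + 1) (by positivity) ?_
  · intro x y j
    rw [dist_eq_norm]
    exact PiLp.norm_apply_le (x - y) j
  · intro x y r hr h
    rw [dist_eq_norm]
    exact euclid_norm_le _ hr fun i => by simpa using h i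

/-- the ratio `2^{-s}` -/
noncomputable def rr (s : ℝ) : ℝ≥0∞ := (2⁻¹ : ℝ≥0∞) ^ s

lemma rr_pow (s : ℝ) (k : ℕ) : rr s ^ k = ((2⁻¹ : ℝ≥0∞) ^ k) ^ s := by
  rw [rr, ← ENNReal.rpow_mul_natCast, mul_comm, ENNReal.rpow_natCast_mul]

lemma ofReal_half_pow (k : ℕ) : ENNReal.ofReal ((1/2) ^ k) = (2⁻¹ : ℝ≥0∞) ^ k := by
  rw [ENNReal.ofReal_pow (by norm_num), one_div, ENNReal.ofReal_inv_of_pos (by norm_num)]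
  simp

lemma hausdorff_zero {X ι : Type*} [MetricSpace X] [MeasurableSpace X] [BorelSpace X] [Countable ι]
    {code : ℕ → X → ι} (hN : Net code) {s : ℝ} (hs : 0 < s) {E : Set X}
    (h : cont code (rr s) E = 0) : μH[s] E = 0 := by
  obtain ⟨D, hD, hdiam⟩ := hN.diam
  have hex : ∀ n : ℕ, ∃ P, Cov code P E ∧ cost (rr s) P < ((n : ℝ≥0∞) + 1)⁻¹ := fun n =>
    exists_cov (h ▸ (ENNReal.inv_pos.2 (by finiteness)))
  choose P hP hPc using hex
  have hlim : Tendsto (fun n : ℕ => ((n : ℝ≥0∞) + 1)⁻¹) atTop (𝓝 0) := by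
    have := (tendsto_add_atTop_iff_nat 1).2 ENNReal.tendsto_inv_nat_nhds_zero
    simpa using this
  have hed : ∀ w : ℕ × ι, Metric.ediam {x | code w.1 x = w.2} ≤ ENNReal.ofReal D * (2⁻¹ : ℝ≥0∞) ^ w.1 := by
    intro w
    refine Metric.ediam_le fun x hx y hy => ?_
    rw [edist_dist, ← ofReal_half_pow, ← ENNReal.ofReal_mul hD]
    exact ENNReal.ofReal_le_ofReal (hdiam _ x y ((show code w.1 x = w.2 from hx).trans (show code w.1 y = w.2 from hy).symm))
  have hr : Tendsto (fun n : ℕ => ENNReal.ofReal D * (((n : ℝ≥0∞) + 1)⁻¹) ^ (1 / s)) atTop (𝓝 0) := by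
    have h1 := (ENNReal.continuous_rpow_const (y := 1 / s)).tendsto 0 |>.comp hlim
    rw [ENNReal.zero_rpow_of_pos (by positivity)] at h1
    have := ENNReal.Tendsto.const_mul (a := ENNReal.ofReal D) h1 (Or.inr (by finiteness))
    simpa using this
  have key := Measure.hausdorffMeasure_le_liminf_tsum (ι := fun n => {w // w ∈ P n}) s E (l := atTop) _ hr
    (fun n w => {x | code w.1.1 x = w.1.2}) (Eventually.of_forall fun n w => by
      refine (hed w.1).trans ?_
      gcongr
      have h1 : rr s ^ w.1.1 ≤ ((n : ℝ≥0∞) + 1)⁻¹ := by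
        refine le_trans ?_ (hPc n).le
        have := ENNReal.le_tsum (f := (P n).indicator (fun w => rr s ^ w.1)) w.1
        rwa [indicator_of_mem w.2] at this
      rw [rr_pow] at h1
      have := ENNReal.rpow_le_rpow h1 (z := 1 / s) (by positivity)
      rwa [← ENNReal.rpow_mul, mul_one_div_cancel hs.ne', ENNReal.rpow_one] at this)
    (Eventually.of_forall fun n x hx => by
      obtain ⟨k, hk⟩ := hP n x hx
      exact mem_iUnion.2 ⟨⟨_, hk⟩, rfl⟩)
  have hb : ∀ n, ∑' w : {w // w ∈ P n}, Metric.ediam {x | code w.1.1 x = w.1.2} ^ s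
      ≤ ENNReal.ofReal D ^ s * ((n : ℝ≥0∞) + 1)⁻¹ := by
    intro n
    calc _ ≤ ∑' w : {w // w ∈ P n}, ENNReal.ofReal D ^ s * rr s ^ w.1.1 := by
          refine ENNReal.tsum_le_tsum fun w => ?_
          rw [rr_pow, ← ENNReal.mul_rpow_of_nonneg _ _ hs.le]
          exact ENNReal.rpow_le_rpow (hed w.1) hs.le
      _ = ENNReal.ofReal D ^ s * cost (rr s) (P n) := by
          rw [ENNReal.tsum_mul_left, cost]
          congr 1
          exact tsum_subtype (P n) (fun w => rr s ^ w.1)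
      _ ≤ _ := by gcongr; exact (hPc n).le
  have hlim2 : Tendsto (fun n : ℕ => ENNReal.ofReal D ^ s * ((n : ℝ≥0∞) + 1)⁻¹) atTop (𝓝 0) := by
    have := ENNReal.Tendsto.const_mul (a := ENNReal.ofReal D ^ s) hlim (Or.inr (by finiteness))
    simpa using this
  have h0 := tendsto_of_tendsto_of_tendsto_of_le_of_le tendsto_const_nhds hlim2 (fun _ => zero_le) hb
  rw [h0.liminf_eq] at key
  exact le_antisymm key zero_le

lemma rr_ne_top (s : ℝ) (hs : 0 ≤ s) : rr s ≠ ⊤ :=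
  ENNReal.rpow_ne_top_of_nonneg hs (by simp)

lemma frostman {m : ℕ} (E : Set (EuclideanSpace ℝ (Fin m) × ℝ)) (hE : MeasurableSet E)
    {s : NNReal} (hs : 0 < s) (h : s < dimH E) :
    ∃ μ : Measure (EuclideanSpace ℝ (Fin m) × ℝ), IsProbabilityMeasure μ ∧ μ Eᶜ = 0 ∧
      ∃ C : ℝ≥0∞, C ≠ ⊤ ∧ ∀ x k, μ (Metric.ball x ((1/2) ^ k)) ≤ C * ((2⁻¹ : ℝ≥0∞) ^ k) ^ (s : ℝ) := by
  have hN := net_X m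
  have hmeas : ∀ c, MeasurableSet {x | dcode (coordX (m := m)) 0 x = c} := by
    intro c
    have : Measurable (dcode (coordX (m := m)) 0) := by
      refine measurable_pi_lambda _ fun j => ?_
      simp only [dcode]
      refine Int.measurable_floor.comp ?_
      refine Measurable.const_mul ?_ _
      rcases j with j | j
      · simp only [coordX, Sum.elim_inl]; fun_prop
      · simp only [coordX, Sum.elim_inr]; fun_prop
    exact this (measurableSet_singleton c)
  have hinf := hausdorffMeasure_of_lt_dimH h
  obtain ⟨c, hc⟩ : ∃ c, cont (dcode (coordX (m := m))) (rr s) (E ∩ {x | dcode (coordX (m := m)) 0 x = c}) ≠ 0 := by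
    by_contra hcon
    push Not at hcon
    have : E ⊆ ⋃ c, (E ∩ {x | dcode (coordX (m := m)) 0 x = c}) := fun x hx => mem_iUnion.2 ⟨_, hx, rfl⟩
    have := measure_mono_null this (measure_iUnion_null fun c =>
      hausdorff_zero hN (s := s) (by exact_mod_cast hs) (hcon c))
    rw [this] at hinf
    exact absurd hinf (by simp)
  obtain ⟨μ, h1, h2, C, hC, h3⟩ := frostman_net hN (rr_ne_top s s.2) _ (hE.inter (hmeas c)) c (fun x hx => hx.2) hc
  refine ⟨μ, h1, measure_mono_null (compl_subset_compl.2 inter_subset_left) h2, C, hC, fun x k => ?_⟩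
  rw [← rr_pow]; exact h3 x k

end HypDim


namespace HypDim
open Set Filter Topology ENNReal

/-- the point of the hyperplane `L(p)` above `x` -/
noncomputable def Phi {m : ℕ} (z : EuclideanSpace ℝ (Fin m) × (EuclideanSpace ℝ (Fin m) × ℝ)) :
    EuclideanSpace ℝ (Fin m) × ℝ := (z.1, ⟪z.2.1, z.1⟫ + z.2.2)

lemma Phi_dist {m : ℕ} {R : ℝ} {x x' : EuclideanSpace ℝ (Fin m)}
    {p p' : EuclideanSpace ℝ (Fin m) × ℝ} (hx : ‖x‖ ≤ R) (hp : ‖p'‖ ≤ R) :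
    dist (Phi (x, p)) (Phi (x', p')) ≤ (R + 1) * (dist x x' + dist p p') := by
  have hR : 0 ≤ R := (norm_nonneg _).trans hx
  have h1 : ‖p.1 - p'.1‖ ≤ dist p p' := by rw [dist_eq_norm]; exact norm_fst_le (p - p')
  have h2 : |p.2 - p'.2| ≤ dist p p' := by rw [dist_eq_norm]; exact norm_snd_le (p - p')
  have h3 : ‖p'.1‖ ≤ R := (norm_fst_le _).trans hp
  have h4 : ‖x - x'‖ = dist x x' := (dist_eq_norm _ _).symm
  have d1 : 0 ≤ dist x x' := dist_nonneg
  have d2 : 0 ≤ dist p p' := dist_nonneg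
  rw [Prod.dist_eq]
  refine max_le ?_ ?_
  · simp only [Phi]; nlinarith [mul_nonneg hR d1, mul_nonneg hR d2]
  · simp only [Phi, Real.dist_eq]
    have : ⟪p.1, x⟫ + p.2 - (⟪p'.1, x'⟫ + p'.2) = ⟪p.1 - p'.1, x⟫ + ⟪p'.1, x - x'⟫ + (p.2 - p'.2) := by
      rw [inner_sub_left, inner_sub_right]; ring
    rw [this]
    have a1 := abs_real_inner_le_norm (p.1 - p'.1) x
    have a2 := abs_real_inner_le_norm p'.1 (x - x')
    have b1 : ‖p.1 - p'.1‖ * ‖x‖ ≤ dist p p' * R := by gcongr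
    have b2 : ‖p'.1‖ * ‖x - x'‖ ≤ R * dist x x' := by rw [h4]; gcongr
    have c1 := abs_add_le (⟪p.1 - p'.1, x⟫ + ⟪p'.1, x - x'⟫) (p.2 - p'.2)
    have c2 := abs_add_le ⟪p.1 - p'.1, x⟫ ⟪p'.1, x - x'⟫
    nlinarith

/-- piece of the union of hyperplanes -/
def piece {m : ℕ} (R : ℕ) (U : Set (EuclideanSpace ℝ (Fin m) × ℝ)) :
    Set (EuclideanSpace ℝ (Fin m) × ℝ) :=
  Phi '' (Metric.closedBall 0 (R : ℝ) ×ˢ (U ∩ Metric.closedBall 0 (R : ℝ)))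

lemma cell_bound (m R : ℕ) (d : ℝ) : ∃ C : ℝ≥0∞, C ≠ ⊤ ∧
    ∀ (k : ℕ) (U : Set (EuclideanSpace ℝ (Fin m) × ℝ)), Metric.ediam U ≤ 2⁻¹ ^ k →
      cont (dcode (coordX (m := m))) (rr (d + m)) (piece R U) ≤ C * ((2⁻¹ : ℝ≥0∞) ^ k) ^ d := by
  classical
  obtain ⟨D, hD, hdiam⟩ := (net_V m).diam
  obtain ⟨C0, hC0⟩ := (net_X m).nbr ((R + 1) * (D + 1))
  refine ⟨((2 * R + 3 : ℕ) : ℝ≥0∞) ^ m * C0, by finiteness, fun k U hU => ?_⟩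
  set cV := dcode (fun (x : EuclideanSpace ℝ (Fin m)) i => x i) with hcV
  set box : Finset (Fin m → ℤ) := Fintype.piFinset fun _ =>
    Finset.Icc (⌊(0:ℝ)⌋ - (⌈(2:ℝ)^k * R⌉₊ + 1)) (⌊(0:ℝ)⌋ + (⌈(2:ℝ)^k * R⌉₊ + 1)) with hbox
  have hceil : ⌈(2:ℝ)^k * R⌉₊ = 2 ^ k * R := by
    rw [show (2:ℝ)^k * R = ((2 ^ k * R : ℕ) : ℝ) by push_cast; ring, Nat.ceil_natCast]
  have hcard : box.card ≤ (2 ^ k * (2 * R + 3)) ^ m := by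
    rw [hbox, Fintype.card_piFinset, Finset.prod_const, Finset.card_univ, Fintype.card_fin]
    gcongr
    rw [Int.card_Icc, hceil]
    have : 1 ≤ 2 ^ k := Nat.one_le_two_pow
    simp only [Int.floor_zero]
    have e : (0 + (((2 ^ k * R : ℕ) : ℤ) + 1) + 1 - (0 - (((2 ^ k * R : ℕ) : ℤ) + 1))).toNat
      = 2 * (2 ^ k * R) + 3 := by omega
    rw [e]; nlinarith
  let S : (Fin m → ℤ) → Set (EuclideanSpace ℝ (Fin m) × ℝ) := fun c =>
    Phi '' ((Metric.closedBall 0 (R : ℝ) ∩ {x | cV k x = c}) ×ˢ (U ∩ Metric.closedBall 0 (R : ℝ)))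
  have hsub : piece R U ⊆ ⋃ c ∈ box, S c := by
    rintro _ ⟨⟨x, p⟩, ⟨hx, hp⟩, rfl⟩
    refine mem_iUnion₂.2 ⟨cV k x, ?_, ⟨(x, p), ⟨⟨hx, rfl⟩, hp⟩, rfl⟩⟩
    rw [hbox, Fintype.mem_piFinset]
    intro i
    simp only [hcV, dcode]
    apply floor_near
    have : |x i| ≤ R := by
      have h1 := PiLp.norm_apply_le x i
      have h2 : ‖x‖ ≤ R := mem_closedBall_zero_iff.1 hx
      rw [Real.norm_eq_abs] at h1; linarith
    rw [zero_sub, abs_neg, abs_mul, abs_of_pos (by positivity : (0:ℝ) < 2 ^ k)]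
    gcongr
  have hS : ∀ c, cont (dcode (coordX (m := m))) (rr (d + m)) (S c) ≤ C0 * rr (d + m) ^ k := by
    intro c
    rcases (S c).eq_empty_or_nonempty with h | h
    · rw [h, cont_empty]; exact zero_le
    obtain ⟨_, ⟨x0, p0⟩, ⟨⟨hx0, hc0⟩, hp0, hp0'⟩, rfl⟩ := h
    obtain ⟨F, hF, hF'⟩ := hC0 k (Phi (x0, p0))
    refine (cont_cell_le F ?_).trans (by gcongr)
    rintro _ ⟨⟨x, p⟩, ⟨⟨hx, hc⟩, hp, hp'⟩, rfl⟩
    refine hF' _ _ rfl ((Phi_dist (R := R) (mem_closedBall_zero_iff.1 hx0)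
      (mem_closedBall_zero_iff.1 hp')).trans ?_)
    have e1 : dist x0 x ≤ D * (1/2)^k := hdiam k x0 x ((show cV k x0 = c from hc0).trans
      (show cV k x = c from hc).symm)
    have e2 : dist p0 p ≤ (1/2)^k := by
      have := (Metric.edist_le_ediam_of_mem hp0 hp).trans hU
      rw [← ofReal_half_pow, edist_dist] at this
      exact (ENNReal.ofReal_le_ofReal_iff (by positivity)).1 this
    calc ((R:ℝ) + 1) * (dist x0 x + dist p0 p) ≤ (R + 1) * (D * (1/2)^k + (1/2)^k) := by gcongr
      _ = _ := by ring
  calc cont (dcode (coordX (m := m))) (rr (d + m)) (piece R U)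
      ≤ contOM (dcode (coordX (m := m))) (rr (d + m)) (⋃ c ∈ box, S c) := cont_mono hsub
    _ ≤ ∑ c ∈ box, contOM (dcode (coordX (m := m))) (rr (d + m)) (S c) :=
        measure_biUnion_finset_le box S
    _ ≤ ∑ c ∈ box, C0 * rr (d + m) ^ k := Finset.sum_le_sum fun c _ => hS c
    _ = box.card * (C0 * rr (d + m) ^ k) := by simp
    _ ≤ ((2 ^ k * (2 * R + 3)) ^ m : ℕ) * (C0 * rr (d + m) ^ k) := by gcongr
    _ = _ := by
      have h0 : (2⁻¹ : ℝ≥0∞) ^ k ≠ 0 := by simp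
      have h1 : (2⁻¹ : ℝ≥0∞) ^ k ≠ ⊤ := by finiteness
      rw [rr_pow, ENNReal.rpow_add _ _ h0 h1, ENNReal.rpow_natCast]
      push_cast
      have : ((2:ℝ≥0∞)^k)^m * ((2⁻¹ : ℝ≥0∞) ^ k)^m = 1 := by
        rw [← mul_pow, ← mul_pow, ENNReal.mul_inv_cancel (by simp) (by simp)]; simp
      rw [mul_pow]
      calc _ = (2 * (R:ℝ≥0∞) + 3) ^ m * C0 * (2⁻¹ ^ k) ^ d * (((2:ℝ≥0∞)^k)^m * ((2⁻¹ : ℝ≥0∞) ^ k)^m) := by ring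
        _ = _ := by rw [this, mul_one]

lemma ediam_bound {d : ℝ} (hd : 0 < d) {C e a : ℝ≥0∞} (hC : C ≠ ⊤) (he : e ≤ 1)
    (h : ∀ k : ℕ, e ≤ 2⁻¹ ^ k → a ≤ C * ((2⁻¹ : ℝ≥0∞) ^ k) ^ d) :
    a ≤ (C * 2 ^ d) * e ^ d := by
  rcases eq_or_ne e 0 with rfl | h0
  · rw [ENNReal.zero_rpow_of_pos hd, mul_zero]
    have ht : Tendsto (fun k : ℕ => C * ((2⁻¹ : ℝ≥0∞) ^ d) ^ k) atTop (𝓝 (C * 0)) := by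
      refine ENNReal.Tendsto.const_mul ?_ (Or.inr hC)
      apply ENNReal.tendsto_pow_atTop_nhds_zero_of_lt_one
      exact ENNReal.rpow_lt_one (by simp) hd
    rw [mul_zero] at ht
    refine ge_of_tendsto' ht fun k => ?_
    have := rr_pow d k
    unfold rr at this
    rw [this]
    exact h k zero_le
  · have hetop : e ≠ ⊤ := ne_top_of_le_ne_top one_ne_top he
    have hpos : 0 < e.toReal := ENNReal.toReal_pos h0 hetop
    have hle : e.toReal ≤ 1 := by simpa using ENNReal.toReal_mono one_ne_top he
    obtain ⟨k, hk1, hk2⟩ := exists_nat_pow_near_of_lt_one hpos hle (by norm_num : (0:ℝ) < 1/2) (by norm_num)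
    have he' : e = ENNReal.ofReal e.toReal := (ENNReal.ofReal_toReal hetop).symm
    refine (h k ?_).trans ?_
    · rw [he', ← ofReal_half_pow]; exact ENNReal.ofReal_le_ofReal hk2
    · rw [mul_assoc, ← ENNReal.mul_rpow_of_nonneg _ _ hd.le]
      gcongr
      have : (2⁻¹ : ℝ≥0∞)^k = 2 * 2⁻¹^(k+1) := by
        rw [pow_succ, mul_comm (2⁻¹^k), ← mul_assoc, ENNReal.mul_inv_cancel (by simp) (by simp), one_mul]
      rw [this]
      gcongr
      rw [he', ← ofReal_half_pow]; exact ENNReal.ofReal_le_ofReal hk1.le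

/-- the outer measure used for the upper bound -/
noncomputable def nuOM (m R : ℕ) (ρ : ℝ≥0∞) : OuterMeasure (EuclideanSpace ℝ (Fin m) × ℝ) where
  measureOf U := contOM (dcode (coordX (m := m))) ρ (piece R U)
  empty := by simp [piece]
  mono := fun h => measure_mono (by unfold piece; gcongr)
  iUnion_nat := fun s _ => by
    refine le_trans (measure_mono ?_) (measure_iUnion_le _)
    unfold piece
    rw [← image_iUnion]
    refine image_mono ?_
    rintro ⟨x, p⟩ ⟨hx, hp, hp'⟩
    obtain ⟨i, hi⟩ := mem_iUnion.1 hp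
    exact mem_iUnion.2 ⟨i, hx, hi, hp'⟩

lemma piece_zero {m : ℕ} (R : ℕ) {d : ℝ} (hd : 0 < d) {E : Set (EuclideanSpace ℝ (Fin m) × ℝ)}
    (h : μH[d] E = 0) : μH[d + m] (piece R E) = 0 := by
  obtain ⟨C, hC, hCb⟩ := cell_bound m R d
  refine hausdorff_zero (net_X m) (by positivity) ?_
  set K := C * 2 ^ d + 1 with hK
  have hKt : K ≠ ⊤ := by
    have : (2:ℝ≥0∞)^d ≠ ⊤ := ENNReal.rpow_ne_top_of_nonneg hd.le (by simp)
    finiteness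
  have hK0 : K ≠ 0 := by simp [hK]
  have := OuterMeasure.le_mkMetric (K • fun e => e ^ d) (nuOM m R (rr (d + m))) 1 one_pos (by
    intro U hU
    refine (ediam_bound hd hC hU fun k hk => hCb k U hk).trans ?_
    simp only [Pi.smul_apply, smul_eq_mul]
    gcongr
    exact le_self_add)
  rw [OuterMeasure.mkMetric_smul _ hKt hK0] at this
  have h2 := this E
  rw [smul_apply, ← Measure.mkMetric_toOuterMeasure] at h2
  change _ ≤ K • μH[d] E at h2
  rw [h, smul_zero] at h2
  exact le_antisymm h2 zero_le

lemma upper {m : ℕ} {E : Set (EuclideanSpace ℝ (Fin m) × ℝ)} :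
    dimH (⋃ R : ℕ, piece R E) ≤ dimH E + m := by
  rw [dimH_iUnion]
  refine iSup_le fun R => ?_
  refine ENNReal.le_of_forall_pos_le_add fun ε hε _ => ?_
  have htop : dimH E ≠ ⊤ := Real.dimH_ne_top E
  set d : NNReal := (dimH E).toNNReal + ε with hd
  have hdd : (d : ℝ≥0∞) = dimH E + ε := by rw [hd, ENNReal.coe_add, ENNReal.coe_toNNReal htop]
  have h0 : μH[(d : ℝ)] E = 0 := by
    apply hausdorffMeasure_of_dimH_lt
    rw [hdd]
    exact ENNReal.lt_add_right htop (by simpa using hε.ne')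
  have hdpos : (0:ℝ) < d := by
    have : 0 < d := lt_of_lt_of_le hε (by rw [hd]; exact le_add_self)
    exact_mod_cast this
  have := piece_zero R hdpos h0
  have h2 : dimH (piece R E) ≤ ((d + m : NNReal) : ℝ≥0∞) := by
    apply dimH_le_of_hausdorffMeasure_ne_top
    push_cast
    rw [this]; simp
  refine h2.trans ?_
  push_cast
  rw [hdd, add_right_comm]

lemma iUnion_piece {m : ℕ} (E : Set (EuclideanSpace ℝ (Fin m) × ℝ)) :
    ⋃ R : ℕ, piece R E = ⋃ p ∈ E, {q | q.2 = ⟪p.1, q.1⟫ + p.2} := by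
  ext q
  simp only [mem_iUnion, piece, mem_image, mem_prod, mem_ofPred_eq, exists_prop]
  constructor
  · rintro ⟨R, ⟨x, p⟩, ⟨_, hp, _⟩, rfl⟩
    exact ⟨p, hp, rfl⟩
  · rintro ⟨p, hp, hq⟩
    obtain ⟨R, hR⟩ := exists_nat_ge (max ‖q.1‖ ‖p‖)
    refine ⟨R, (q.1, p), ⟨mem_closedBall_zero_iff.2 ((le_max_left _ _).trans hR), hp,
      mem_closedBall_zero_iff.2 ((le_max_right _ _).trans hR)⟩, ?_⟩
    exact Prod.ext rfl hq.symm
end HypDim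


namespace HypDim
open Set Filter Topology ENNReal

lemma exists_level {u : ℝ≥0∞} (h0 : u ≠ 0) (h1 : u ≤ 1) :
    ∃ k : ℕ, u ≤ 2⁻¹ ^ k ∧ 2⁻¹ ^ (k + 1) ≤ u := by
  have hetop : u ≠ ⊤ := ne_top_of_le_ne_top one_ne_top h1
  have hpos : 0 < u.toReal := ENNReal.toReal_pos h0 hetop
  have hle : u.toReal ≤ 1 := by simpa using ENNReal.toReal_mono one_ne_top h1
  obtain ⟨k, hk1, hk2⟩ := exists_nat_pow_near_of_lt_one hpos hle (by norm_num : (0:ℝ) < 1/2) (by norm_num)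
  have he' : u = ENNReal.ofReal u.toReal := (ENNReal.ofReal_toReal hetop).symm
  refine ⟨k, ?_, ?_⟩
  · rw [he', ← ofReal_half_pow]; exact ENNReal.ofReal_le_ofReal hk2
  · rw [he', ← ofReal_half_pow]; exact ENNReal.ofReal_le_ofReal hk1.le

lemma neg_rpow_le {t : ℝ} (ht : 0 < t) (u : ℝ≥0∞) :
    u ^ (-t) ≤ 1 + ∑' k : ℕ, {v : ℝ≥0∞ | v ≤ 2⁻¹ ^ k}.indicator (fun _ => (2:ℝ≥0∞) ^ t * (2 ^ t) ^ k) u := by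
  have htwo : 1 ≤ (2:ℝ≥0∞) ^ t := ENNReal.one_le_rpow (by norm_num) ht
  rcases eq_or_ne u 0 with rfl | h0
  · have : ∑' k : ℕ, {v : ℝ≥0∞ | v ≤ 2⁻¹ ^ k}.indicator (fun _ => (2:ℝ≥0∞) ^ t * (2 ^ t) ^ k) 0 = ⊤ := by
      rw [eq_top_iff, ← ENNReal.tsum_const_eq_top_of_ne_zero (α := ℕ) (c := 1) one_ne_zero]
      refine ENNReal.tsum_le_tsum fun k => ?_
      rw [indicator_of_mem (by simp)]
      exact one_le_mul_of_one_le_of_one_le htwo (one_le_pow₀ htwo)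
    rw [this]; simp
  · rcases le_total u 1 with h1 | h1
    · obtain ⟨k, hk1, hk2⟩ := exists_level h0 h1
      calc u ^ (-t) ≤ ((2⁻¹ : ℝ≥0∞) ^ (k+1)) ^ (-t) := by
            rw [ENNReal.rpow_neg, ENNReal.rpow_neg]; gcongr
        _ = (2:ℝ≥0∞) ^ t * (2 ^ t) ^ k := by
            rw [ENNReal.rpow_neg, ← ENNReal.inv_rpow, ← ENNReal.inv_pow, inv_inv, pow_succ',
              ENNReal.mul_rpow_of_nonneg _ _ ht.le]
            congr 1
            rw [← ENNReal.rpow_natCast, ← ENNReal.rpow_natCast, ← ENNReal.rpow_mul, ← ENNReal.rpow_mul, mul_comm]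
        _ = {v : ℝ≥0∞ | v ≤ 2⁻¹ ^ k}.indicator (fun _ => (2:ℝ≥0∞) ^ t * (2 ^ t) ^ k) u := by
            rw [indicator_of_mem (show u ∈ {v : ℝ≥0∞ | v ≤ 2⁻¹ ^ k} from hk1)]
        _ ≤ _ := ENNReal.le_tsum k
        _ ≤ _ := le_add_self
    · refine le_trans ?_ le_self_add
      rw [ENNReal.rpow_neg, ENNReal.inv_le_one]
      exact ENNReal.one_le_rpow h1 ht

/-- constant in the energy bound -/
noncomputable def Kst (s t : ℝ) : ℝ≥0∞ := 2 ^ t * (1 - 2 ^ t * 2⁻¹ ^ s)⁻¹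

lemma Kst_ne_top {s t : ℝ} (ht : 0 < t) (hts : t < s) : Kst s t ≠ ⊤ := by
  have h1 : (2:ℝ≥0∞) ^ t ≠ ⊤ := ENNReal.rpow_ne_top_of_nonneg ht.le (by simp)
  have h2 : (2:ℝ≥0∞) ^ t * 2⁻¹ ^ s < 1 := by
    rw [ENNReal.inv_rpow, ← ENNReal.rpow_neg, ← ENNReal.rpow_add _ _ (by simp) (by simp)]
    exact ENNReal.rpow_lt_one_of_one_lt_of_neg (by norm_num) (by linarith)
  exact ENNReal.mul_ne_top h1 (ENNReal.inv_ne_top.2 (tsub_pos_of_lt h2).ne')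

lemma energy {α : Type*} [MeasurableSpace α] (ν : Measure α) {u : α → ℝ≥0∞} (hu : Measurable u)
    {s t : ℝ} (ht : 0 < t) {C : ℝ≥0∞}
    (h : ∀ k : ℕ, ν {x | u x ≤ 2⁻¹ ^ k} ≤ C * ((2⁻¹ : ℝ≥0∞) ^ k) ^ s) :
    ∫⁻ x, u x ^ (-t) ∂ν ≤ ν univ + C * Kst s t := by
  calc ∫⁻ x, u x ^ (-t) ∂ν ≤ ∫⁻ x, (1 + ∑' k : ℕ, {x | u x ≤ 2⁻¹ ^ k}.indicator
          (fun _ => (2:ℝ≥0∞) ^ t * (2 ^ t) ^ k) x) ∂ν := lintegral_mono fun x => neg_rpow_le ht (u x)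
    _ = ν univ + ∑' k : ℕ, ∫⁻ x, {x | u x ≤ 2⁻¹ ^ k}.indicator
          (fun _ => (2:ℝ≥0∞) ^ t * (2 ^ t) ^ k) x ∂ν := by
        rw [lintegral_add_left measurable_const, lintegral_one, lintegral_tsum]
        intro k
        exact (measurable_const.indicator (hu measurableSet_Iic)).aemeasurable
    _ = ν univ + ∑' k : ℕ, (2:ℝ≥0∞) ^ t * (2 ^ t) ^ k * ν {x | u x ≤ 2⁻¹ ^ k} := by
        congr 1
        refine tsum_congr fun k => ?_
        exact lintegral_indicator_const (hu measurableSet_Iic) _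
    _ ≤ ν univ + ∑' k : ℕ, C * 2 ^ t * (2 ^ t * 2⁻¹ ^ s) ^ k := by
        refine add_le_add_right (ENNReal.tsum_le_tsum fun k => ?_) _
        refine (mul_le_mul_right (h k) _).trans (le_of_eq ?_)
        have := rr_pow s k
        unfold rr at this
        rw [← this, mul_pow]; ring
    _ = _ := by
        rw [ENNReal.tsum_mul_left, ENNReal.tsum_geometric, Kst, mul_assoc]

section slab
variable {m : ℕ} (L : Measure (EuclideanSpace ℝ (Fin m))) [L.IsAddHaarMeasure]

lemma slab_unit {e : EuclideanSpace ℝ (Fin m)} (he : ‖e‖ = 1) (c R δ : ℝ) (hδ : 0 < δ) :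
    L {x | x ∈ Metric.closedBall 0 R ∧ |⟪e, x⟫ + c| ≤ δ} ≤
      ENNReal.ofReal δ * L (Metric.closedBall 0 (R + 3)) := by
  set S := {x | x ∈ Metric.closedBall (0 : EuclideanSpace ℝ (Fin m)) R ∧ |⟪e, x⟫ + c| ≤ δ} with hS
  have hSm : MeasurableSet S := by
    apply IsClosed.measurableSet
    apply IsClosed.inter Metric.isClosed_closedBall
    exact isClosed_le (f := fun x : EuclideanSpace ℝ (Fin m) => |⟪e, x⟫ + c|) (by fun_prop) continuous_const
  set N := ⌈1/δ⌉₊ with hN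
  let T : ℕ → Set (EuclideanSpace ℝ (Fin m)) := fun j => (fun x => (-(3 * j * δ)) • e + x) ⁻¹' S
  have hT : ∀ j, L (T j) = L S := fun j => measure_preimage_add L _ S
  have hTm : ∀ j, MeasurableSet (T j) := fun j => (measurable_const_add _) hSm
  have hee : ⟪e, e⟫ = (1:ℝ) := by rw [real_inner_self_eq_norm_sq, he]; norm_num
  have hval : ∀ j x, x ∈ T j → |⟪e, x⟫ + c - 3 * j * δ| ≤ δ := by
    intro j x hx
    have := hx.2
    rw [inner_add_right, inner_smul_right, hee] at this
    convert this using 2; ring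
  have hdis : Pairwise (Function.onFun Disjoint T) := by
    have key : ∀ i j : ℕ, i < j → Disjoint (T i) (T j) := by
      intro i j hij
      rw [Set.disjoint_left]
      intro x hi hj
      have h1 := abs_le.1 (hval i x hi)
      have h2 := abs_le.1 (hval j x hj)
      have h3 : (i:ℝ) + 1 ≤ j := by exact_mod_cast hij
      nlinarith
    intro i j hij
    rcases lt_or_gt_of_ne hij with h | h
    · exact key i j h
    · exact (key j i h).symm
  have hsub : (⋃ j ∈ Finset.range N, T j) ⊆ Metric.closedBall 0 (R + 3) := by
    intro x hx
    simp only [mem_iUnion, Finset.mem_range, exists_prop] at hx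
    obtain ⟨j, hj, hx⟩ := hx
    have h1 : ‖(-(3 * j * δ)) • e + x‖ ≤ R := mem_closedBall_zero_iff.1 hx.1
    rw [mem_closedBall_zero_iff]
    have h2 : (j:ℝ) < 1 / δ := Nat.lt_ceil.1 hj
    rw [lt_div_iff₀ hδ] at h2
    have h3 : ‖((3 * j * δ)) • e‖ ≤ 3 := by
      rw [norm_smul, he, Real.norm_eq_abs, abs_of_nonneg (by positivity)]; linarith
    calc ‖x‖ = ‖((-(3 * j * δ)) • e + x) + (3 * j * δ) • e‖ := by congr 1; module
      _ ≤ _ := norm_add_le _ _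
      _ ≤ _ := by linarith
  have hmain : ENNReal.ofReal (1/δ) * L S ≤ L (Metric.closedBall 0 (R + 3)) := by
    calc ENNReal.ofReal (1/δ) * L S ≤ N * L S := by
          gcongr
          rw [← ENNReal.ofReal_natCast]
          exact ENNReal.ofReal_le_ofReal (Nat.le_ceil _)
      _ = ∑ j ∈ Finset.range N, L (T j) := by simp [hT]
      _ = L (⋃ j ∈ Finset.range N, T j) :=
          (measure_biUnion_finset (fun i _ j _ hij => hdis hij) fun j _ => hTm j).symm
      _ ≤ _ := measure_mono hsub
  calc L S = ENNReal.ofReal δ * (ENNReal.ofReal (1/δ) * L S) := by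
        rw [← mul_assoc, ← ENNReal.ofReal_mul hδ.le, mul_one_div_cancel hδ.ne', ENNReal.ofReal_one, one_mul]
    _ ≤ _ := by gcongr

lemma slab (q : EuclideanSpace ℝ (Fin m) × ℝ) (hq : q ≠ 0) {R δ : ℝ} (hR : 1 ≤ R) (hδ : 0 < δ) :
    L {x | x ∈ Metric.closedBall 0 R ∧ |⟪q.1, x⟫ + q.2| ≤ δ * ‖q‖} ≤
      ENNReal.ofReal (2 * R * δ) * L (Metric.closedBall 0 (R + 3)) := by
  have hw : 0 < ‖q‖ := norm_pos_iff.2 hq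
  rcases le_or_gt 1 (2 * R * δ) with h | h
  · calc _ ≤ 1 * L (Metric.closedBall 0 (R + 3)) := by
          rw [one_mul]
          exact measure_mono fun x hx => Metric.closedBall_subset_closedBall (by linarith) hx.1
      _ ≤ _ := by gcongr; exact ENNReal.one_le_ofReal.2 h
  rcases le_or_gt ‖q‖ (2 * R * ‖q.1‖) with h2 | h2
  · have hα : 0 < ‖q.1‖ := by
      by_contra hc
      have : ‖q.1‖ = 0 := le_antisymm (not_lt.1 hc) (norm_nonneg _)
      rw [this] at h2; linarith
    refine le_trans (measure_mono ?_) (slab_unit L (e := ‖q.1‖⁻¹ • q.1) ?_ (q.2 / ‖q.1‖) R (2 * R * δ) (by positivity))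
    · rintro x ⟨hx1, hx2⟩
      refine ⟨hx1, ?_⟩
      rw [real_inner_smul_left]
      have : ‖q.1‖⁻¹ * ⟪q.1, x⟫ + q.2 / ‖q.1‖ = (⟪q.1, x⟫ + q.2) / ‖q.1‖ := by field_simp
      rw [this, abs_div, abs_of_pos hα, div_le_iff₀ hα]
      nlinarith
    · rw [norm_smul, norm_inv, norm_norm, inv_mul_cancel₀ hα.ne']
  · have : {x | x ∈ Metric.closedBall (0 : EuclideanSpace ℝ (Fin m)) R ∧ |⟪q.1, x⟫ + q.2| ≤ δ * ‖q‖} = ∅ := by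
      rw [Set.eq_empty_iff_forall_notMem]
      rintro x ⟨hx1, hx2⟩
      have hx : ‖x‖ ≤ R := mem_closedBall_zero_iff.1 hx1
      have h3 := abs_real_inner_le_norm q.1 x
      have h4 : ‖q.1‖ * ‖x‖ ≤ ‖q.1‖ * R := by gcongr
      have h5 : ‖q.1‖ < ‖q‖ := by nlinarith [norm_nonneg q.1]
      have h6 : ‖q‖ = |q.2| := by
        rw [Prod.norm_def] at h5 ⊢
        rcases le_total ‖q.1‖ ‖q.2‖ with h | h
        · rw [max_eq_right h, Real.norm_eq_abs]
        · rw [max_eq_left h] at h5; exact absurd h5 (lt_irrefl _)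
      have h7 : |q.2| ≤ |⟪q.1, x⟫ + q.2| + |⟪q.1, x⟫| := by
        have := abs_sub (⟪q.1, x⟫ + q.2) ⟪q.1, x⟫
        simpa using this
      rw [← h6] at h7
      have h8 : δ * ‖q‖ < ‖q‖ / 2 := by nlinarith
      linarith
    rw [this]; simp

lemma slab_energy {t : ℝ} (ht : 0 < t) (ht1 : t < 1) {R : ℝ} (hR : 1 ≤ R) :
    ∃ K : ℝ≥0∞, K ≠ ⊤ ∧ ∀ q : EuclideanSpace ℝ (Fin m) × ℝ,
      ∫⁻ x in Metric.closedBall 0 R, ENNReal.ofReal |⟪q.1, x⟫ + q.2| ^ (-t) ∂L ≤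
        K * ENNReal.ofReal ‖q‖ ^ (-t) := by
  set B := L (Metric.closedBall 0 (R + 3)) with hB
  have hBt : B ≠ ⊤ := measure_closedBall_lt_top.ne
  set K := L (Metric.closedBall 0 R) + ENNReal.ofReal (2 * R) * B * Kst 1 t with hK
  have hKt : K ≠ ⊤ := by
    have := Kst_ne_top ht ht1
    have : L (Metric.closedBall 0 R) ≠ ⊤ := measure_closedBall_lt_top.ne
    finiteness
  refine ⟨K + 1, by finiteness, fun q => ?_⟩
  rcases eq_or_ne q 0 with rfl | hq
  · simp only [norm_zero, ENNReal.ofReal_zero]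
    rw [ENNReal.zero_rpow_of_neg (by linarith), ENNReal.mul_top (by simp)]
    exact le_top
  have hw : 0 < ‖q‖ := norm_pos_iff.2 hq
  have hmeas : Measurable fun x : EuclideanSpace ℝ (Fin m) => ENNReal.ofReal (|⟪q.1, x⟫ + q.2| / ‖q‖) := by
    apply Measurable.ennreal_ofReal
    apply Continuous.measurable
    fun_prop
  have hen := energy (L.restrict (Metric.closedBall 0 R)) hmeas (s := 1) ht
    (C := ENNReal.ofReal (2 * R) * B) (by
      intro k
      rw [ENNReal.rpow_one, ← ofReal_half_pow]
      refine (Measure.restrict_apply (μ := L) (s := Metric.closedBall 0 R)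
        (hmeas measurableSet_Iic)).trans_le ?_
      refine le_trans (measure_mono ?_) ((slab L q hq hR (δ := (1/2)^k) (by positivity)).trans (le_of_eq ?_))
      · rintro x ⟨hx1, hx2⟩
        refine ⟨hx2, ?_⟩
        have := (ENNReal.ofReal_le_ofReal_iff (by positivity)).1 hx1
        rwa [div_le_iff₀ hw] at this
      · rw [ENNReal.ofReal_mul (by positivity)]; ring)
  rw [Measure.restrict_apply_univ] at hen
  have : ∀ x : EuclideanSpace ℝ (Fin m), ENNReal.ofReal |⟪q.1, x⟫ + q.2| ^ (-t) =
      ENNReal.ofReal (|⟪q.1, x⟫ + q.2| / ‖q‖) ^ (-t) * ENNReal.ofReal ‖q‖ ^ (-t) := by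
    intro x
    rw [← ENNReal.mul_rpow_of_ne_top (by simp) (by simp), ← ENNReal.ofReal_mul (by positivity), div_mul_cancel₀ _ hw.ne']
  simp_rw [this]
  rw [lintegral_mul_const _ (hmeas.pow_const _)]
  gcongr
  exact hen.trans le_self_add

end slab
end HypDim


namespace HypDim
open Set Filter Topology ENNReal

lemma continuous_Phi {m : ℕ} : Continuous (Phi (m := m)) := by
  unfold Phi
  fun_prop

/-- kernel of the potential -/
noncomputable def ker {m : ℕ} (t : ℝ) (z : (EuclideanSpace ℝ (Fin m) × (EuclideanSpace ℝ (Fin m) × ℝ)) ×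
    (EuclideanSpace ℝ (Fin m) × ℝ)) : ℝ≥0∞ :=
  ENNReal.ofReal |⟪(z.1.2 - z.2).1, z.1.1⟫ + (z.1.2 - z.2).2| ^ (-t)

lemma measurable_ker {m : ℕ} (t : ℝ) : Measurable (ker (m := m) t) := by
  unfold ker
  apply Measurable.pow_const
  apply Measurable.ennreal_ofReal
  apply Continuous.measurable
  fun_prop

/-- potential -/
noncomputable def pot {m : ℕ} (t : ℝ) (μ : Measure (EuclideanSpace ℝ (Fin m) × ℝ))
    (z : EuclideanSpace ℝ (Fin m) × (EuclideanSpace ℝ (Fin m) × ℝ)) : ℝ≥0∞ :=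
  ∫⁻ p', ker t (z, p') ∂μ

lemma measurable_pot {m : ℕ} (t : ℝ) (μ : Measure (EuclideanSpace ℝ (Fin m) × ℝ)) [SFinite μ] :
    Measurable (pot t μ) := (measurable_ker t).lintegral_prod_right'

section
variable {m : ℕ} (L : Measure (EuclideanSpace ℝ (Fin m))) [L.IsAddHaarMeasure]
  (μ : Measure (EuclideanSpace ℝ (Fin m) × ℝ)) [IsProbabilityMeasure μ]

lemma riesz_fin {s t : ℝ} (ht : 0 < t) (hts : t < s) {C : ℝ≥0∞} (hC : C ≠ ⊤)
    (h : ∀ x k, μ (Metric.ball x ((1/2)^k)) ≤ C * ((2⁻¹ : ℝ≥0∞)^k)^s)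
    (p : EuclideanSpace ℝ (Fin m) × ℝ) : ∫⁻ p', ENNReal.ofReal ‖p - p'‖ ^ (-t) ∂μ ≠ ⊤ := by
  have hs : 0 < s := ht.trans hts
  have h2s : (2:ℝ≥0∞) ^ s ≠ ⊤ := ENNReal.rpow_ne_top_of_nonneg hs.le (by simp)
  refine ne_top_of_le_ne_top ?_ (energy μ (s := s) (C := C * 2 ^ s + 1)
    (u := fun p' => ENNReal.ofReal ‖p - p'‖) (by fun_prop) ht ?_)
  · have := Kst_ne_top ht hts
    finiteness
  · intro k
    cases k with
    | zero =>
      refine prob_le_one.trans ?_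
      simp
    | succ k =>
      refine (measure_mono (t := Metric.ball p ((1/2)^k)) ?_).trans ((h p k).trans ?_)
      · intro p' hp'
        have hp' : ENNReal.ofReal ‖p - p'‖ ≤ 2⁻¹ ^ (k+1) := hp'
        rw [← ofReal_half_pow, ENNReal.ofReal_le_ofReal_iff (by positivity)] at hp'
        rw [Metric.mem_ball', dist_eq_norm]
        refine hp'.trans_lt ?_
        rw [pow_succ]
        have : (0:ℝ) < (1/2)^k := by positivity
        linarith
      · have e : (2⁻¹ : ℝ≥0∞)^k = 2 * 2⁻¹^(k+1) := by
          rw [pow_succ, mul_comm (2⁻¹^k), ← mul_assoc, ENNReal.mul_inv_cancel (by simp) (by simp), one_mul]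
        rw [e, ENNReal.mul_rpow_of_nonneg _ _ hs.le, ← mul_assoc]
        gcongr
        exact le_self_add

lemma pot_ae {s t : ℝ} (ht : 0 < t) (ht1 : t < 1) (hts : t < s) {C : ℝ≥0∞} (hC : C ≠ ⊤)
    (h : ∀ x k, μ (Metric.ball x ((1/2)^k)) ≤ C * ((2⁻¹ : ℝ≥0∞)^k)^s)
    (p : EuclideanSpace ℝ (Fin m) × ℝ) : ∀ᵐ x ∂L, pot t μ (x, p) < ⊤ := by
  have key : ∀ N : ℕ, ∀ᵐ x ∂(L.restrict (Metric.closedBall 0 ((N:ℝ) + 1))), pot t μ (x, p) < ⊤ := by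
    intro N
    obtain ⟨K, hK, hKb⟩ := slab_energy L ht ht1 (R := (N:ℝ) + 1) (by linarith [Nat.cast_nonneg (α := ℝ) N])
    have hm : Measurable fun x => pot t μ (x, p) := (measurable_pot t μ).comp (by fun_prop)
    refine ae_lt_top hm ?_
    have hm2 : Measurable fun z : EuclideanSpace ℝ (Fin m) × (EuclideanSpace ℝ (Fin m) × ℝ) =>
        ker t ((z.1, p), z.2) := (measurable_ker t).comp (by fun_prop)
    have : ∫⁻ x in Metric.closedBall 0 ((N:ℝ) + 1), pot t μ (x, p) ∂L =
        ∫⁻ p', ∫⁻ x in Metric.closedBall 0 ((N:ℝ) + 1), ker t ((x, p), p') ∂L ∂μ := by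
      unfold pot
      exact lintegral_lintegral_swap hm2.aemeasurable
    rw [this]
    refine ne_top_of_le_ne_top (ENNReal.mul_ne_top hK (riesz_fin μ ht hts hC h p)) ?_
    rw [← lintegral_const_mul _ (by fun_prop)]
    exact lintegral_mono fun p' => hKb (p - p')
  have hU : (⋃ N : ℕ, Metric.closedBall (0 : EuclideanSpace ℝ (Fin m)) ((N:ℝ) + 1)) = univ := by
    rw [eq_univ_iff_forall]
    intro x
    obtain ⟨N, hN⟩ := exists_nat_ge ‖x‖
    exact mem_iUnion.2 ⟨N, mem_closedBall_zero_iff.2 (by linarith)⟩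
  have := (ae_restrict_iUnion_iff (μ := L) (fun N : ℕ => Metric.closedBall (0 : EuclideanSpace ℝ (Fin m)) ((N:ℝ) + 1))
    (fun x => pot t μ (x, p) < ⊤)).2 key
  rwa [hU, Measure.restrict_univ] at this

lemma exists_level_set {s t : ℝ} (ht : 0 < t) (ht1 : t < 1) (hts : t < s) {C : ℝ≥0∞} (hC : C ≠ ⊤)
    (h : ∀ x k, μ (Metric.ball x ((1/2)^k)) ≤ C * ((2⁻¹ : ℝ≥0∞)^k)^s)
    {E A : Set (EuclideanSpace ℝ (Fin m) × ℝ)} (hA : MeasurableSet A) (hE : μ Eᶜ = 0)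
    (hpos : ∀ p ∈ E, L {x | Phi (x, p) ∈ A} ≠ 0) :
    ∃ M : ℕ, (L.prod μ) (Phi ⁻¹' A ∩ {z | pot t μ z ≤ M}) ≠ 0 := by
  by_contra! hcon
  have hGm : MeasurableSet (Phi ⁻¹' A ∩ {z | pot t μ z < ⊤}) :=
    (continuous_Phi.measurable hA).inter ((measurable_pot t μ) measurableSet_Iio)
  have h0 : (L.prod μ) (Phi ⁻¹' A ∩ {z | pot t μ z < ⊤}) = 0 := by
    refine measure_mono_null ?_ (measure_iUnion_null hcon)
    rintro z ⟨hz1, hz2⟩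
    obtain ⟨M, hM⟩ := ENNReal.exists_nat_gt (ne_of_lt hz2)
    exact mem_iUnion.2 ⟨M, hz1, hM.le⟩
  rw [Measure.prod_apply_symm hGm, lintegral_eq_zero_iff (measurable_measure_prodMk_right hGm)] at h0
  have hEae : ∀ᵐ p ∂μ, p ∈ E := hE
  obtain ⟨p, hp1, hp2⟩ := (h0.and hEae).exists
  refine hpos p hp2 ?_
  have hae : ∀ᵐ x ∂L, ¬ (Phi (x, p) ∈ A ∧ pot t μ (x, p) < ⊤) := by
    rw [ae_iff]; simp only [not_not]; exact hp1
  have := (pot_ae L μ ht ht1 hts hC h p).and hae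
  rw [← nonpos_iff_eq_zero, ← show L {x | ¬ (pot t μ (x, p) < ⊤ ∧ ¬ (Phi (x, p) ∈ A ∧ pot t μ (x, p) < ⊤))} = 0 from this]
  refine measure_mono fun x hx => ?_
  intro hx'
  exact hx'.2 ⟨hx, hx'.1⟩

lemma slice_bound {t : ℝ} (ht : 0 < t) (M : ℕ) {r : ℝ≥0∞} (hr : r ≠ ⊤)
    (x : EuclideanSpace ℝ (Fin m)) (T : Set (EuclideanSpace ℝ (Fin m) × ℝ)) (hT : MeasurableSet T)
    (hpot : ∀ p ∈ T, pot t μ (x, p) ≤ M)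
    (hd : ∀ p ∈ T, ∀ p' ∈ T, edist (Phi (x, p)) (Phi (x, p')) ≤ r) : μ T ≤ M * r ^ t := by
  rcases T.eq_empty_or_nonempty with rfl | ⟨p0, hp0⟩
  · simp
  have h1 : r ^ (-t) * μ T ≤ M := by
    calc r ^ (-t) * μ T = ∫⁻ p in T, r ^ (-t) ∂μ := by rw [setLIntegral_const]
      _ ≤ ∫⁻ p in T, ker t ((x, p0), p) ∂μ := by
        refine setLIntegral_mono' hT fun p hp => ?_
        unfold ker
        rw [ENNReal.rpow_neg, ENNReal.rpow_neg]
        gcongr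
        refine le_trans ?_ (hd p0 hp0 p hp)
        rw [Prod.edist_eq]
        refine le_trans (le_of_eq ?_) (le_max_right _ _)
        rw [edist_dist, Real.dist_eq]
        congr 2
        simp only [Phi, Prod.fst_sub, Prod.snd_sub, inner_sub_left]
        ring
      _ ≤ _ := setLIntegral_le_lintegral _ _
      _ ≤ M := hpot p0 hp0
  rw [ENNReal.rpow_neg, mul_comm, ← div_eq_mul_inv] at h1
  rwa [ENNReal.div_le_iff_le_mul (Or.inr (by simp))
    (Or.inl (ENNReal.rpow_ne_top_of_nonneg ht.le hr))] at h1

lemma lam_bound {t : ℝ} (ht : 0 < t) (M : ℕ) {A : Set (EuclideanSpace ℝ (Fin m) × ℝ)} (hA : MeasurableSet A)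
    (U : Set (EuclideanSpace ℝ (Fin m) × ℝ)) (hU : Metric.ediam U ≤ 1) :
    (((L.prod μ).restrict (Phi ⁻¹' A ∩ {z | pot t μ z ≤ M})).map Phi) U ≤
      (M * L (Metric.ball 0 1)) * Metric.ediam U ^ (t + m) := by
  set G := Phi ⁻¹' A ∩ {z | pot t μ z ≤ M} with hG
  have hGm : MeasurableSet G :=
    (continuous_Phi.measurable hA).inter ((measurable_pot t μ) measurableSet_Iic)
  rcases U.eq_empty_or_nonempty with rfl | ⟨u0, hu0⟩
  · simp
  set r := Metric.ediam U with hr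
  have hrt : r ≠ ⊤ := ne_top_of_le_ne_top one_ne_top hU
  have hrc : Metric.ediam (closure U) = r := Metric.ediam_closure U
  refine (measure_mono subset_closure).trans ?_
  rw [Measure.map_apply continuous_Phi.measurable isClosed_closure.measurableSet,
    Measure.restrict_apply (continuous_Phi.measurable isClosed_closure.measurableSet)]
  have hTm : MeasurableSet (Phi ⁻¹' closure U ∩ G) :=
    (continuous_Phi.measurable isClosed_closure.measurableSet).inter hGm
  rw [Measure.prod_apply hTm]
  have hslice : ∀ x, μ (Prod.mk x ⁻¹' (Phi ⁻¹' closure U ∩ G)) ≤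
      (Metric.closedBall u0.1 r.toReal).indicator (fun _ => M * r ^ t) x := by
    intro x
    by_cases hx : x ∈ Metric.closedBall u0.1 r.toReal
    · rw [indicator_of_mem hx]
      refine slice_bound μ ht M hrt x _ (measurable_prodMk_left hTm) (fun p hp => hp.2.2) ?_
      intro p hp p' hp'
      rw [← hrc]
      exact Metric.edist_le_ediam_of_mem hp.1 hp'.1
    · rw [indicator_of_notMem hx]
      refine le_of_eq ?_
      convert measure_empty (μ := μ)
      rw [Set.eq_empty_iff_forall_notMem]
      rintro p ⟨hp, -⟩
      apply hx
      have h1 : edist (Phi (x, p)) u0 ≤ r := by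
        rw [← hrc]; exact Metric.edist_le_ediam_of_mem hp (subset_closure hu0)
      have h2 : edist x u0.1 ≤ r := le_trans (by rw [Prod.edist_eq]; exact le_max_left _ _) h1
      rw [Metric.mem_closedBall, dist_edist]
      exact ENNReal.toReal_mono hrt h2
  calc _ ≤ ∫⁻ x, (Metric.closedBall u0.1 r.toReal).indicator (fun _ => M * r ^ t) x ∂L :=
        lintegral_mono hslice
    _ = M * r ^ t * L (Metric.closedBall u0.1 r.toReal) :=
        lintegral_indicator_const Metric.isClosed_closedBall.measurableSet _
    _ = M * r ^ t * (r ^ (m:ℝ) * L (Metric.ball 0 1)) := by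
        rw [Measure.addHaar_closedBall L _ ENNReal.toReal_nonneg, finrank_euclideanSpace, Fintype.card_fin,
          ENNReal.ofReal_pow ENNReal.toReal_nonneg, ENNReal.ofReal_toReal hrt, ENNReal.rpow_natCast]
    _ = _ := by
        rw [ENNReal.rpow_add_of_nonneg _ _ ht.le (by positivity)]; ring

lemma lower_aux {s t : ℝ} (ht : 0 < t) (ht1 : t < 1) (hts : t < s) {C : ℝ≥0∞} (hC : C ≠ ⊤)
    (h : ∀ x k, μ (Metric.ball x ((1/2)^k)) ≤ C * ((2⁻¹ : ℝ≥0∞)^k)^s)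
    {E A : Set (EuclideanSpace ℝ (Fin m) × ℝ)} (hA : MeasurableSet A) (hE : μ Eᶜ = 0)
    (hpos : ∀ p ∈ E, L {x | Phi (x, p) ∈ A} ≠ 0) :
    μH[t + m] ((⋃ p ∈ E, {q | q.2 = ⟪p.1, q.1⟫ + p.2}) ∩ A) ≠ 0 := by
  obtain ⟨M, hM⟩ := exists_level_set L μ ht ht1 hts hC h hA hE hpos
  set Z := (⋃ p ∈ E, {q : EuclideanSpace ℝ (Fin m) × ℝ | q.2 = ⟪p.1, q.1⟫ + p.2}) ∩ A with hZ
  set G := Phi ⁻¹' A ∩ {z | pot t μ z ≤ M} with hG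
  set lam := ((L.prod μ).restrict G).map Phi with hlam
  set K : ℝ≥0∞ := M * L (Metric.ball 0 1) + 1 with hK
  have hKt : K ≠ ⊤ := by
    have : L (Metric.ball 0 1) ≠ ⊤ := measure_ball_lt_top.ne
    finiteness
  have hK0 : K ≠ 0 := by simp [hK]
  have hle : K⁻¹ • lam ≤ μH[t + m] := by
    refine Measure.le_hausdorffMeasure _ _ 1 one_pos fun U hU => ?_
    rw [Measure.smul_apply, smul_eq_mul]
    calc K⁻¹ * lam U ≤ K⁻¹ * (K * Metric.ediam U ^ (t + m)) := by
          gcongr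
          refine (lam_bound L μ ht M hA U hU).trans ?_
          gcongr
          exact le_self_add
      _ = _ := by rw [← mul_assoc, ENNReal.inv_mul_cancel hK0 hKt, one_mul]
  intro h0
  have h1 : K⁻¹ * lam Z ≤ 0 := by
    rw [← h0]; exact hle Z
  have h2 : lam Z = 0 := by
    rcases mul_eq_zero.1 (le_antisymm h1 zero_le) with h | h
    · exact absurd (ENNReal.inv_eq_zero.1 h) hKt
    · exact h
  apply hM
  have h3 : (L.prod μ) (Phi ⁻¹' Z ∩ G) = 0 := by
    rw [← nonpos_iff_eq_zero, ← h2]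
    exact (Measure.le_restrict_apply _ _).trans (Measure.le_map_apply continuous_Phi.aemeasurable _)
  have h4 : (L.prod μ) (univ ×ˢ Eᶜ) = 0 := by rw [Measure.prod_prod, hE, mul_zero]
  refine measure_mono_null ?_ (measure_union_null h3 h4)
  rintro ⟨x, p⟩ hz
  by_cases hp : p ∈ E
  · left
    refine ⟨⟨mem_iUnion₂.2 ⟨p, hp, rfl⟩, hz.1⟩, hz⟩
  · right; exact ⟨mem_univ _, hp⟩
end

lemma slice_pos {m : ℕ} {A : Set (EuclideanSpace ℝ (Fin m) × ℝ)} (p : EuclideanSpace ℝ (Fin m) × ℝ)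
    (h : μH[(m:ℝ)] ({q | q.2 = ⟪p.1, q.1⟫ + p.2} ∩ A) ≠ 0) :
    (μH[(m:ℝ)] : Measure (EuclideanSpace ℝ (Fin m))) {x | Phi (x, p) ∈ A} ≠ 0 := by
  have hLip : LipschitzWith (‖p.1‖₊ + 1) (fun x => Phi (x, p)) := by
    refine LipschitzWith.of_dist_le_mul fun x y => ?_
    rw [Prod.dist_eq]
    have h0 : 0 ≤ ‖p.1‖ * dist x y := by positivity
    have hd : dist x y = ‖x - y‖ := dist_eq_norm _ _
    refine max_le ?_ ?_
    · simp only [Phi, NNReal.coe_add, coe_nnnorm, NNReal.coe_one]; nlinarith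
    · simp only [Phi, NNReal.coe_add, coe_nnnorm, NNReal.coe_one, Real.dist_eq]
      have := abs_real_inner_le_norm p.1 (x - y)
      rw [← hd, inner_sub_right] at this
      rw [show ⟪p.1, x⟫ + p.2 - (⟪p.1, y⟫ + p.2) = ⟪p.1, x⟫ - ⟪p.1, y⟫ by ring]
      nlinarith [dist_nonneg (x := x) (y := y)]
  intro h0
  apply h
  have := hLip.hausdorffMeasure_image_le (d := (m:ℝ)) (by positivity) {x | Phi (x, p) ∈ A}
  rw [h0, mul_zero] at this
  refine measure_mono_null ?_ (le_antisymm this zero_le)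
  rintro q ⟨hq1, hq2⟩
  have e : Phi (q.1, p) = q := Prod.ext rfl hq1.symm
  exact ⟨q.1, show Phi (q.1, p) ∈ A from e ▸ hq2, e⟩

lemma lower {m : ℕ} {E A : Set (EuclideanSpace ℝ (Fin m) × ℝ)} (hE : MeasurableSet E) (hEne : E.Nonempty)
    (hA : MeasurableSet A)
    (hpos : ∀ p ∈ E, μH[(m:ℝ)] ({q | q.2 = ⟪p.1, q.1⟫ + p.2} ∩ A) ≠ 0) :
    min (dimH E + m) (m + 1) ≤ dimH ((⋃ p ∈ E, {q | q.2 = ⟪p.1, q.1⟫ + p.2}) ∩ A) := by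
  rw [add_comm (m : ℝ≥0∞) 1, min_add_add_right]
  set Z := (⋃ p ∈ E, {q : EuclideanSpace ℝ (Fin m) × ℝ | q.2 = ⟪p.1, q.1⟫ + p.2}) ∩ A with hZ
  haveI : (μH[(m:ℝ)] : Measure (EuclideanSpace ℝ (Fin m))).IsAddHaarMeasure := by
    have := MeasureTheory.isAddHaarMeasure_hausdorffMeasure (E := EuclideanSpace ℝ (Fin m))
    rwa [finrank_euclideanSpace, Fintype.card_fin] at this
  have hm : (m : ℝ≥0∞) ≤ dimH Z := by
    obtain ⟨p, hp⟩ := hEne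
    have h1 : μH[((m : NNReal) : ℝ)] Z ≠ 0 := by
      intro h0
      refine hpos p hp (measure_mono_null ?_ h0)
      exact fun q hq => ⟨mem_iUnion₂.2 ⟨p, hp, hq.1⟩, hq.2⟩
    have := le_dimH_of_hausdorffMeasure_ne_zero h1
    simpa using this
  rcases eq_or_ne (dimH E) 0 with h0 | h0
  · rw [h0]; simpa using hm
  have key : ∀ t : NNReal, (t : ℝ≥0∞) < min (dimH E) 1 → 0 < t → (t : ℝ≥0∞) + m ≤ dimH Z := by
    intro t ht ht0
    have ht1 : t < 1 := by exact_mod_cast ht.trans_le (min_le_right _ _)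
    obtain ⟨s, hs1, hs2⟩ := ENNReal.lt_iff_exists_nnreal_btwn.1 (ht.trans_le (min_le_left _ _))
    have hs1' : t < s := by exact_mod_cast hs1
    obtain ⟨μ, hμ, hμE, C, hC, hb⟩ := frostman E hE (ht0.trans hs1') hs2
    have := lower_aux (μH[(m:ℝ)] : Measure (EuclideanSpace ℝ (Fin m))) μ (s := s) (t := t)
      (by exact_mod_cast ht0) (by exact_mod_cast ht1) (by exact_mod_cast hs1') hC hb hA hμE
      (fun p hp => slice_pos p (hpos p hp))
    have h2 : μH[((t + m : NNReal) : ℝ)] Z ≠ 0 := by push_cast; exact this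
    have := le_dimH_of_hausdorffMeasure_ne_zero h2
    push_cast at this
    exact this
  have hsub : min (dimH E) 1 ≤ dimH Z - m := by
    refine le_of_forall_lt fun c hc => ?_
    obtain ⟨t, ht1, ht2⟩ := ENNReal.lt_iff_exists_nnreal_btwn.1 hc
    refine ht1.trans_le ?_
    have ht0 : 0 < t := by
      have : (0:ℝ≥0∞) < t := lt_of_le_of_lt zero_le ht1
      exact_mod_cast this
    exact ENNReal.le_sub_of_add_le_right (by simp) (key t ht2 ht0)
  calc _ ≤ dimH Z - m + m := by gcongr
    _ = _ := tsub_add_cancel_of_le hm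

theorem main {m : ℕ} {E A : Set (EuclideanSpace ℝ (Fin m) × ℝ)} (hE : MeasurableSet E) (hEne : E.Nonempty)
    (hA : MeasurableSet A)
    (hpos : ∀ p ∈ E, μH[(m:ℝ)] ({q | q.2 = ⟪p.1, q.1⟫ + p.2} ∩ A) ≠ 0) :
    dimH ((⋃ p ∈ E, {q | q.2 = ⟪p.1, q.1⟫ + p.2}) ∩ A) =
      dimH (⋃ p ∈ E, {q : EuclideanSpace ℝ (Fin m) × ℝ | q.2 = ⟪p.1, q.1⟫ + p.2}) ∧
    dimH (⋃ p ∈ E, {q : EuclideanSpace ℝ (Fin m) × ℝ | q.2 = ⟪p.1, q.1⟫ + p.2}) =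
      min (dimH E + m) (m + 1) := by
  have h1 := lower hE hEne hA hpos
  have h2 := dimH_mono (inter_subset_left (s := ⋃ p ∈ E, {q : EuclideanSpace ℝ (Fin m) × ℝ | q.2 = ⟪p.1, q.1⟫ + p.2}) (t := A))
  have h3 : dimH (⋃ p ∈ E, {q : EuclideanSpace ℝ (Fin m) × ℝ | q.2 = ⟪p.1, q.1⟫ + p.2}) ≤
      min (dimH E + m) (m + 1) := by
    refine le_min ?_ ?_
    · rw [← iUnion_piece]; exact upper
    · refine (dimH_mono (subset_univ _)).trans ?_
      rw [Real.dimH_univ_eq_finrank]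
      simp
  exact ⟨le_antisymm h2 (h3.trans h1), le_antisymm h3 (h1.trans h2)⟩
end HypDim

/-- **Dimension of a union of positive-measure pieces of hyperplanes.** Let `E ⊆ ℝⁿ` be a
non-empty Borel set and `A ⊆ ℝⁿ` a Borel set intersecting each hyperplane `L(p)`, `p ∈ E`,
in a set of positive `(n−1)`-dimensional measure. Then
`dim_H (L(E) ∩ A) = dim_H L(E) = min {dim_H E + n − 1, n}`. -/
theorem dimH_hyperplaneUnion_inter (n : ℕ) (hn : 2 ≤ n)
    (E : Set (EuclideanSpace ℝ (Fin (n - 1)) × ℝ)) (hE : MeasurableSet E)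
    (hEne : E.Nonempty)
    (A : Set (EuclideanSpace ℝ (Fin (n - 1)) × ℝ)) (hA : MeasurableSet A)
    (hpos : ∀ p ∈ E, 0 < μH[(n : ℝ) - 1] (hyperplane p ∩ A)) :
    dimH (hyperplaneUnion E ∩ A) = dimH (hyperplaneUnion E) ∧
      dimH (hyperplaneUnion E) = min (dimH E + ((n - 1 : ℕ) : ENNReal)) (n : ENNReal) := by
  obtain ⟨m, rfl⟩ : ∃ m, n = m + 1 := ⟨n - 1, by omega⟩
  have h := HypDim.main (m := m + 1 - 1) (E := E) (A := A) hE hEne hA (fun p hp => by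
    have h1 := (hpos p hp).ne'
    rw [show ((m + 1 : ℕ) : ℝ) - 1 = ((m + 1 - 1 : ℕ) : ℝ) by simp] at h1
    exact h1)
  refine ⟨h.1, ?_⟩
  have h2 := h.2
  have e : (((m + 1 : ℕ)) : ENNReal) = ((m + 1 - 1 : ℕ) : ENNReal) + 1 := by simp
  rw [e]
  exact h2
end
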